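/- arXiv:1307.2849 — 2 statements merged into one kernel-verified Lean document; each statement's English description precedes it below -/
import Mathlib

section
/- In the Black–Scholes specialization, κ/l₀ = (α+β)/(nα+β). Consequently, the Nash-equilibrium aggregate public good contribution Ĉ(t) = κ·θ(t) and the social planner's aggregate contribution C_*(t) = l₀·θ(t) satisfy Ĉ(t)/C_*(t) = (α+β)/(nα+β) ≤ 1 for all t ≥ 0, a ratio that does not depend on the volatility σ. -/
open MeasureTheory ProbabilityTheory Set Filter
open scoped ENNReal NNReal

noncomputable section

/-- The constant `δ = (β/α)·((α+β)/α)^{1/(α−1)}`. -/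
def CDdelta (α β : ℝ) : ℝ := β / α * ((α + β) / α) ^ ((1 : ℝ) / (α - 1))

/-- `A = E[∫_0^∞ δ e^{−ru} inf_{0≤s≤u} e^{−(σα/(1−α))·W(u−s)} du]`, as a value in `[0,∞]`. -/
def bsA {Ω : Type*} [MeasurableSpace Ω] (P : Measure Ω) (W : ℝ → Ω → ℝ)
    (α β σ r : ℝ) : ℝ≥0∞ :=
  ∫⁻ ω, ∫⁻ u in Set.Ioi (0 : ℝ),
    ENNReal.ofReal (CDdelta α β * Real.exp (-r * u) *
      sInf ((fun s => Real.exp (-(σ * α / (1 - α)) * W (u - s) ω)) '' Set.Icc 0 u))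
    ∂volume ∂P

/-- `γ(t) = (1/A)·[ ((α+β)/α)·e^{σW(t)}·inf_{0≤s≤t} e^{(σαβ/(1−α−β))·W(s)} ]^{−1/(1−α)}`. -/
def bsGamma {Ω : Type*} [MeasurableSpace Ω] (P : Measure Ω) (W : ℝ → Ω → ℝ)
    (α β σ r : ℝ) (t : ℝ) (ω : Ω) : ℝ :=
  ((bsA P W α β σ r).toReal)⁻¹ *
    ((α + β) / α * Real.exp (σ * W t ω) *
      sInf ((fun s => Real.exp (σ * α * β / (1 - α - β) * W s ω)) '' Set.Icc 0 t))
        ^ (-(1 / (1 - α)))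

/-- `θ(t) = sup_{0≤s≤t} e^{−(σα/(1−α−β))·W(s)}`. -/
def bsTheta {Ω : Type*} (W : ℝ → Ω → ℝ) (α β σ : ℝ) (t : ℝ) (ω : Ω) : ℝ :=
  sSup ((fun s => Real.exp (-(σ * α / (1 - α - β)) * W s ω)) '' Set.Icc 0 t)

/-- `E[∫_0^∞ e^{−rt} e^{σW(t)} γ(t) dt]`, as a value in `[0,∞]`. -/
def bsI1 {Ω : Type*} [MeasurableSpace Ω] (P : Measure Ω) (W : ℝ → Ω → ℝ)
    (α β σ r : ℝ) : ℝ≥0∞ :=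
  ∫⁻ ω, ∫⁻ t in Set.Ioi (0 : ℝ),
    ENNReal.ofReal (Real.exp (-r * t) * Real.exp (σ * W t ω) * bsGamma P W α β σ r t ω)
    ∂volume ∂P

/-- `E[r·∫_0^∞ e^{−rt} θ(t) dt]`, as a value in `[0,∞]`. -/
def bsI2 {Ω : Type*} [MeasurableSpace Ω] (P : Measure Ω) (W : ℝ → Ω → ℝ)
    (α β σ r : ℝ) : ℝ≥0∞ :=
  ∫⁻ ω, ∫⁻ t in Set.Ioi (0 : ℝ),
    ENNReal.ofReal (r * Real.exp (-r * t) * bsTheta W α β σ t ω) ∂volume ∂P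

/-- The social planner's constant `l₀ = nw / ( E[∫ ψ_x γ dt] + E[r ∫ e^{−rt} θ dt] )`. -/
def bsl0 {Ω : Type*} [MeasurableSpace Ω] (P : Measure Ω) (W : ℝ → Ω → ℝ)
    (α β σ r : ℝ) (n : ℕ) (w : ℝ) : ℝ :=
  n * w / ((bsI1 P W α β σ r).toReal + (bsI2 P W α β σ r).toReal)

/-- The Nash constant `κ = w / ( E[∫ ψ_x γ dt] + (1/n)·E[r ∫ e^{−rt} θ dt] )`. -/
def bsKappa {Ω : Type*} [MeasurableSpace Ω] (P : Measure Ω) (W : ℝ → Ω → ℝ)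
    (α β σ r : ℝ) (n : ℕ) (w : ℝ) : ℝ :=
  w / ((bsI1 P W α β σ r).toReal + (1 / n) * (bsI2 P W α β σ r).toReal)

/-!
Write `a = σα/(1-α-β)`, `b = σα/(1-α)`, `X = -W`, and let `M` be the running maximum of `X`. Up to
constants, the integrals in `κ` and `l₀` are discounted exponential functionals of `M` and of the
drawdown `M - X`:

* `θ(t) = e^{a M(t)}`, so the public-good term is `I₂ = r E ∫ e^{-rt} e^{a M} dt`;
* since `σαβ/(1-α-β)/(1-α) = a - b`, the private-good term is
  `I₁ = (K/A) E ∫ e^{-rt} e^{a M - b (M - X)} dt` with `K = ((α+β)/α)^{-1/(1-α)}`;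
* by time reversal, `A = δ E ∫ e^{-rt} e^{-b (M - X)} dt`.

By the Wiener–Hopf factorization, at an independent exponential time of rate `r` the maximum and the
drawdown are independent, which turns `I₁` into `(K/δ) I₂ = (α/β) I₂`; moreover `0 < I₂ < ∞` because
`a² < 2r`. Then `κ/l₀ = (I₁ + I₂)/(n I₁ + I₂) = (α+β)/(nα+β)`.

The factorization is proved first for random walks (`walkGen_wienerHopf`), by splitting a path at
its first maximum: the pieces before and after it are independent, and the sum over the position of
the maximum is a Cauchy product of generating functions. It passes to Brownian motion
(`expInt_wienerHopf`) by sampling on grids of mesh tending to `0` and dominated convergence. The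
domination needs `E ∫ e^{-rt} e^{a M} dt < ∞` (`expInt_ne_top`), which follows by Fatou from an
elementary bound for walks: reversing time, `M_n` has the law of Lindley's recursion
`R_{n+1} = max (R_n + ξ_n) 0`, and `E cosh (a R_n)` grows at most geometrically.
-/

/-! ### Path functionals of a real sequence -/

/-- Running maximum `max_{0 ≤ j ≤ n} s j` of a real sequence. -/
def pathMax (s : ℕ → ℝ) (n : ℕ) : ℝ :=
  (Finset.range (n + 1)).sup' Finset.nonempty_range_add_one s

/-- Partial sums `y 0 + ⋯ + y (k - 1)`: the random walk with steps `y`. -/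
def walk (y : ℕ → ℝ) (k : ℕ) : ℝ := ∑ i ∈ Finset.range k, y i

lemma le_pathMax (s : ℕ → ℝ) {n j : ℕ} (h : j ≤ n) : s j ≤ pathMax s n :=
  Finset.le_sup' s (Finset.mem_range.2 (Nat.lt_succ_of_le h))

lemma pathMax_le {s : ℕ → ℝ} {n : ℕ} {c : ℝ} (h : ∀ j ≤ n, s j ≤ c) : pathMax s n ≤ c :=
  Finset.sup'_le _ _ fun j hj => h j (Nat.lt_succ_iff.1 (Finset.mem_range.1 hj))

lemma exists_pathMax (s : ℕ → ℝ) (n : ℕ) : ∃ k ≤ n, pathMax s n = s k := by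
  obtain ⟨k, hk, h⟩ := Finset.exists_mem_eq_sup' (Finset.nonempty_range_add_one (n := n)) s
  exact ⟨k, Nat.lt_succ_iff.1 (Finset.mem_range.1 hk), h⟩

lemma pathMax_congr {s s' : ℕ → ℝ} {n : ℕ} (h : ∀ j ≤ n, s j = s' j) :
    pathMax s n = pathMax s' n :=
  le_antisymm (pathMax_le fun j hj => h j hj ▸ le_pathMax s' hj)
    (pathMax_le fun j hj => (h j hj).symm ▸ le_pathMax s hj)

lemma pathMax_reflect (s : ℕ → ℝ) (n : ℕ) : pathMax (fun j => s (n - j)) n = pathMax s n := by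
  apply le_antisymm
  · exact pathMax_le fun j _ => le_pathMax s (Nat.sub_le n j)
  · refine pathMax_le fun j hj => ?_
    have := le_pathMax (fun j => s (n - j)) (Nat.sub_le n j)
    simpa [Nat.sub_sub_self hj] using this

lemma pathMax_add_const (s : ℕ → ℝ) (n : ℕ) (c : ℝ) :
    pathMax (fun j => s j + c) n = pathMax s n + c := by
  obtain ⟨k, hk, h⟩ := exists_pathMax s n
  apply le_antisymm
  · exact pathMax_le fun j hj => by linarith [le_pathMax s hj]
  · rw [h]; exact le_pathMax (fun j => s j + c) hk

lemma walk_zero (y : ℕ → ℝ) : walk y 0 = 0 := by simp [walk]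

lemma walk_succ (y : ℕ → ℝ) (k : ℕ) : walk y (k + 1) = walk y k + y k :=
  Finset.sum_range_succ _ _

lemma walk_shift (y : ℕ → ℝ) (k i : ℕ) :
    walk (fun l => y (k + l)) i = walk y (k + i) - walk y k := by
  simp [walk, Finset.sum_range_add]

lemma walk_congr {y y' : ℕ → ℝ} {k : ℕ} (h : ∀ i < k, y i = y' i) : walk y k = walk y' k :=
  Finset.sum_congr rfl fun i hi => h i (Finset.mem_range.1 hi)

lemma walk_reverse (y : ℕ → ℝ) (n : ℕ) {j : ℕ} (hj : j ≤ n) :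
    walk (fun i => y (n - 1 - i)) j = walk y n - walk y (n - j) := by
  induction j with
  | zero => simp [walk_zero]
  | succ j ih =>
    have h1 : n - j = (n - (j + 1)) + 1 := by omega
    have h2 : n - 1 - j = n - (j + 1) := by omega
    rw [walk_succ, ih (by omega), h1, walk_succ, h2]
    ring

lemma measurable_walk (k : ℕ) : Measurable fun y : ℕ → ℝ => walk y k :=
  Finset.measurable_sum _ fun i _ => measurable_pi_apply i

lemma measurable_pathMax {X : Type*} [MeasurableSpace X] {f : ℕ → X → ℝ}
    (hf : ∀ j, Measurable (f j)) (n : ℕ) : Measurable fun x => pathMax (fun j => f j x) n := by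
  have := Finset.measurable_sup' (Finset.nonempty_range_add_one (n := n))
    (f := f) (fun j _ => hf j)
  convert this using 2 with x
  simp [pathMax, Finset.sup'_apply]

/-- The contribution of the walk up to its first maximum: `e^{a S_k}` on the event that `k` is a
strict ascending ladder time. -/
def ladderPart (a : ℝ) (k : ℕ) (y : ℕ → ℝ) : ℝ≥0∞ :=
  {y : ℕ → ℝ | ∀ j < k, walk y j < walk y k}.indicator
    (fun y => ENNReal.ofReal (Real.exp (a * walk y k))) y

/-- The contribution of the walk after its first maximum: `e^{b S_m}` on the event that the walk
stays nonpositive up to time `m`. -/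
def nonposPart (b : ℝ) (m : ℕ) (y : ℕ → ℝ) : ℝ≥0∞ :=
  {y : ℕ → ℝ | ∀ i ≤ m, walk y i ≤ 0}.indicator
    (fun y => ENNReal.ofReal (Real.exp (b * walk y m))) y

lemma measurable_ladderPart (a : ℝ) (k : ℕ) : Measurable (ladderPart a k) := by
  refine Measurable.indicator ?_ ?_
  · exact ((measurable_walk k).const_mul a).exp.ennreal_ofReal
  · simp only [ofPred_forall]
    exact MeasurableSet.iInter fun j => MeasurableSet.iInter fun _ =>
      measurableSet_lt (measurable_walk j) (measurable_walk k)

lemma measurable_nonposPart (b : ℝ) (m : ℕ) : Measurable (nonposPart b m) := by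
  refine Measurable.indicator ?_ ?_
  · exact ((measurable_walk m).const_mul b).exp.ennreal_ofReal
  · simp only [ofPred_forall]
    exact MeasurableSet.iInter fun j => MeasurableSet.iInter fun _ =>
      measurableSet_le (measurable_walk j) measurable_const

lemma ladderPart_congr (a : ℝ) {k : ℕ} {y y' : ℕ → ℝ} (h : ∀ i < k, y i = y' i) :
    ladderPart a k y = ladderPart a k y' := by
  have hw : ∀ j ≤ k, walk y j = walk y' j := fun j hj => walk_congr fun i hi => h i (by omega)
  have : (∀ j < k, walk y j < walk y k) ↔ (∀ j < k, walk y' j < walk y' k) := by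
    refine forall₂_congr fun j hj => ?_
    rw [hw j hj.le, hw k le_rfl]
  simp only [ladderPart, indicator, mem_ofPred_eq, this]
  rw [hw k le_rfl]

lemma nonposPart_congr (b : ℝ) {m : ℕ} {y y' : ℕ → ℝ} (h : ∀ i < m, y i = y' i) :
    nonposPart b m y = nonposPart b m y' := by
  have hw : ∀ j ≤ m, walk y j = walk y' j := fun j hj => walk_congr fun i hi => h i (by omega)
  have : (∀ j ≤ m, walk y j ≤ 0) ↔ (∀ j ≤ m, walk y' j ≤ 0) := by
    refine forall₂_congr fun j hj => ?_
    rw [hw j hj]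
  simp only [nonposPart, indicator, mem_ofPred_eq, this, hw m le_rfl]

/-- Splitting a path at the first time `k` at which it attains its maximum. Exactly one term of
the sum is nonzero. -/
lemma exp_pathMax_eq_sum (a b : ℝ) (y : ℕ → ℝ) (n : ℕ) :
    ENNReal.ofReal (Real.exp (a * pathMax (walk y) n - b * (pathMax (walk y) n - walk y n)))
      = ∑ p ∈ Finset.HasAntidiagonal.antidiagonal n,
          ladderPart a p.1 y * nonposPart b p.2 (fun i => y (p.1 + i)) := by
  classical
  have hex := exists_pathMax (walk y) n
  obtain ⟨hk, hkm⟩ := Nat.find_spec hex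
  have hmin : ∀ j < Nat.find hex, walk y j < walk y (Nat.find hex) := by
    intro j hj
    have h1 := Nat.find_min hex hj
    have hjn : j ≤ n := by omega
    rw [← hkm]
    exact lt_of_le_of_ne (le_pathMax _ hjn) fun h => h1 ⟨hjn, h.symm⟩
  generalize Nat.find hex = k at *
  rw [Finset.Nat.sum_antidiagonal_eq_sum_range_succ_mk, Finset.sum_eq_single k]
  · have h1 : ladderPart a k y = ENNReal.ofReal (Real.exp (a * walk y k)) := by
      rw [ladderPart, indicator_of_mem]; exact hmin
    have h2 : nonposPart b (n - k) (fun i => y (k + i))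
        = ENNReal.ofReal (Real.exp (b * (walk y n - walk y k))) := by
      rw [nonposPart, indicator_of_mem]
      · rw [walk_shift, Nat.add_sub_cancel' hk]
      · intro i hi
        rw [walk_shift, ← hkm]
        linarith [le_pathMax (walk y) (show k + i ≤ n by omega)]
    rw [h1, h2, ← ENNReal.ofReal_mul (Real.exp_nonneg _), ← Real.exp_add, hkm]
    congr 2; ring
  · intro j hj hjk
    have hjn : j ≤ n := Nat.lt_succ_iff.1 (Finset.mem_range.1 hj)
    rcases lt_or_gt_of_ne hjk with h | h
    · have : nonposPart b (n - j) (fun i => y (j + i)) = 0 := by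
        rw [nonposPart, indicator_of_notMem]
        intro hc
        have := hc (k - j) (by omega)
        rw [walk_shift, Nat.add_sub_cancel' h.le] at this
        linarith [hmin j h]
      simp [this]
    · have : ladderPart a j y = 0 := by
        rw [ladderPart, indicator_of_notMem]
        intro hc
        have := hc k h
        linarith [le_pathMax (walk y) hjn]
      simp [this]
  · intro h
    exact absurd (Finset.mem_range.2 (Nat.lt_succ_of_le hk)) h

/-! ### Random walks with i.i.d. steps -/

/-- The sequence that agrees with `y` below `m` and vanishes afterwards. -/
def extendZero (m : ℕ) (y : Fin m → ℝ) : ℕ → ℝ := fun i => if h : i < m then y ⟨i, h⟩ else 0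

lemma measurable_extendZero (m : ℕ) : Measurable (extendZero m) := by
  refine measurable_pi_lambda _ fun i => ?_
  by_cases h : i < m
  · simpa [extendZero, h] using measurable_pi_apply _
  · simp [extendZero, h]

section IID

variable {Ω : Type*} [MeasurableSpace Ω] {P : Measure Ω} [IsProbabilityMeasure P]
  {ξ : ℕ → Ω → ℝ} {μ : Measure ℝ}

lemma map_comp_eq_pi (hind : iIndepFun ξ P) (hm : ∀ i, Measurable (ξ i))
    (hlaw : ∀ i, P.map (ξ i) = μ) {m : ℕ} {e : Fin m → ℕ} (he : e.Injective) :
    P.map (fun ω i => ξ (e i) ω) = Measure.pi fun _ => μ := by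
  have h := (iIndepFun_iff_map_fun_eq_pi_map (fun i => (hm (e i)).aemeasurable)).1
    (hind.precomp he)
  simp only [hlaw] at h
  exact h

/-- Expectations of functionals of finitely many steps do not change when the steps are
relabelled injectively. -/
lemma lintegral_relabel (hind : iIndepFun ξ P) (hm : ∀ i, Measurable (ξ i))
    (hlaw : ∀ i, P.map (ξ i) = μ) {m : ℕ} {e : ℕ → ℕ} (he : Set.InjOn e (Set.Iio m))
    {F : (ℕ → ℝ) → ℝ≥0∞} (hF : Measurable F)
    (hFm : ∀ y y' : ℕ → ℝ, (∀ i < m, y i = y' i) → F y = F y') :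
    ∫⁻ ω, F (fun i => ξ (e i) ω) ∂P = ∫⁻ ω, F (fun i => ξ i ω) ∂P := by
  have key : ∀ e : ℕ → ℕ, Set.InjOn e (Set.Iio m) →
      ∫⁻ ω, F (fun i => ξ (e i) ω) ∂P
        = ∫⁻ z, F (extendZero m z) ∂(Measure.pi fun _ : Fin m => μ) := by
    intro e he
    have hinj : Function.Injective fun i : Fin m => e i :=
      fun i j h => Fin.ext (he i.2 j.2 h)
    rw [← map_comp_eq_pi hind hm hlaw hinj,
      lintegral_map (f := fun z => F (extendZero m z)) (hF.comp (measurable_extendZero m))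
        (measurable_pi_lambda _ fun i => hm _)]
    refine lintegral_congr fun ω => hFm _ _ fun i hi => ?_
    simp [extendZero, hi]
  rw [key e he, ← key id (Set.injOn_id _)]
  rfl

/-- A functional of the first `k` steps is independent of a functional of the next `m` steps,
and the latter may be computed from time `0`. -/
lemma lintegral_mul_shift (hind : iIndepFun ξ P) (hm : ∀ i, Measurable (ξ i))
    (hlaw : ∀ i, P.map (ξ i) = μ) {k m : ℕ}
    {F G : (ℕ → ℝ) → ℝ≥0∞} (hF : Measurable F) (hG : Measurable G)
    (hFk : ∀ y y' : ℕ → ℝ, (∀ i < k, y i = y' i) → F y = F y')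
    (hGm : ∀ y y' : ℕ → ℝ, (∀ i < m, y i = y' i) → G y = G y') :
    ∫⁻ ω, F (fun i => ξ i ω) * G (fun i => ξ (k + i) ω) ∂P
      = (∫⁻ ω, F (fun i => ξ i ω) ∂P) * ∫⁻ ω, G (fun i => ξ i ω) ∂P := by
  have hd : Disjoint (Finset.range k) (Finset.Ico k (k + m)) := by
    rw [Finset.disjoint_left]; intro i h1 h2; simp at h1 h2; omega
  have hI := hind.indepFun_finset _ _ hd hm
  have hφ : Measurable fun z : Finset.range k → ℝ =>
      F (extendZero k fun i => z ⟨i, Finset.mem_range.2 i.2⟩) :=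
    hF.comp ((measurable_extendZero k).comp (measurable_pi_lambda _ fun i => measurable_pi_apply _))
  have hψ : Measurable fun z : Finset.Ico k (k + m) → ℝ =>
      G (extendZero m fun i => z ⟨k + i, Finset.mem_Ico.2 ⟨by omega, by omega⟩⟩) :=
    hG.comp ((measurable_extendZero m).comp (measurable_pi_lambda _ fun i => measurable_pi_apply _))
  have hFG := hI.comp hφ hψ
  have e1 : ∀ ω, F (fun i => ξ i ω)
      = F (extendZero k fun i : Fin k => ξ i ω) := fun ω =>
    hFk _ _ fun i hi => by simp [extendZero, hi]
  have e2 : ∀ ω, G (fun i => ξ (k + i) ω)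
      = G (extendZero m fun i : Fin m => ξ (k + i) ω) := fun ω =>
    hGm _ _ fun i hi => by simp [extendZero, hi]
  rw [← lintegral_relabel hind hm hlaw (e := fun i => k + i)
    (fun i _ j _ h => by simpa using h) hG hGm]
  simp_rw [e1, e2]
  exact lintegral_mul_eq_lintegral_mul_lintegral_of_indepFun''
    (hφ.comp (measurable_pi_lambda (fun ω (i : Finset.range k) => ξ i ω)
      fun i => hm _)).aemeasurable
    (hψ.comp (measurable_pi_lambda (fun ω (i : Finset.Ico k (k + m)) => ξ i ω)
      fun i => hm _)).aemeasurable hFG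

/-- Time reversal: the running maximum has the law of the maximal increment up to the
terminal time. -/
lemma lintegral_pathMax_reverse (hind : iIndepFun ξ P) (hm : ∀ i, Measurable (ξ i))
    (hlaw : ∀ i, P.map (ξ i) = μ) {g : ℝ → ℝ≥0∞} (hg : Measurable g) (n : ℕ) :
    ∫⁻ ω, g (pathMax (walk fun i => ξ i ω) n) ∂P
      = ∫⁻ ω, g (pathMax (fun j => walk (fun i => ξ i ω) n - walk (fun i => ξ i ω) j) n) ∂P := by
  rw [← lintegral_relabel hind hm hlaw (m := n) (e := fun i => n - 1 - i)
    (F := fun y => g (pathMax (walk y) n))]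
  · refine lintegral_congr fun ω => ?_
    congr 1
    rw [← pathMax_reflect (fun j => walk (fun i => ξ i ω) n - walk (fun i => ξ i ω) j)]
    exact pathMax_congr fun j hj => walk_reverse (fun i => ξ i ω) n hj
  · intro i hi j hj h
    simp only [mem_Iio] at hi hj h
    omega
  · exact hg.comp (measurable_pathMax measurable_walk n)
  · intro y y' h
    congr 1
    exact pathMax_congr fun j hj => walk_congr fun i hi => h i (by omega)

/-- Cauchy product of series in `[0,∞]`. -/
lemma ennreal_tsum_mul_tsum (u v : ℕ → ℝ≥0∞) :
    (∑' k, u k) * ∑' m, v m = ∑' n, ∑ p ∈ Finset.HasAntidiagonal.antidiagonal n, u p.1 * v p.2 := by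
  calc (∑' k, u k) * ∑' m, v m = ∑' k, ∑' m, u k * v m := by
        simp_rw [ENNReal.tsum_mul_left, ENNReal.tsum_mul_right]
    _ = ∑' p : ℕ × ℕ, u p.1 * v p.2 := (ENNReal.tsum_prod (f := fun k m => u k * v m)).symm
    _ = ∑' x : Σ n, Finset.HasAntidiagonal.antidiagonal n, u x.2.1.1 * v x.2.1.2 :=
        (Finset.HasAntidiagonal.sigmaAntidiagonalEquivProd.tsum_eq (fun p : ℕ × ℕ => u p.1 * v p.2)).symm
    _ = ∑' n, ∑ p ∈ Finset.HasAntidiagonal.antidiagonal n, u p.1 * v p.2 := by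
        rw [ENNReal.tsum_sigma']
        refine tsum_congr fun n => ?_
        rw [tsum_fintype, Finset.sum_coe_sort (Finset.HasAntidiagonal.antidiagonal n) (fun p => u p.1 * v p.2)]

/-- Generating function `∑ qⁿ E[e^{a M_n - b (M_n - S_n)}]`, with `M_n` the running maximum of the
walk `S`. -/
def walkGen (P : Measure Ω) (ξ : ℕ → Ω → ℝ) (q : ℝ≥0∞) (a b : ℝ) : ℝ≥0∞ :=
  ∑' n, q ^ n * ∫⁻ ω, ENNReal.ofReal (Real.exp (a * pathMax (walk fun i => ξ i ω) n
    - b * (pathMax (walk fun i => ξ i ω) n - walk (fun i => ξ i ω) n))) ∂P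

/-- The generating function splits into a factor depending on `a` and one depending on `b`. -/
lemma walkGen_eq_mul (hind : iIndepFun ξ P) (hm : ∀ i, Measurable (ξ i))
    (hlaw : ∀ i, P.map (ξ i) = μ) (q : ℝ≥0∞) (a b : ℝ) :
    walkGen P ξ q a b = (∑' k, q ^ k * ∫⁻ ω, ladderPart a k (fun i => ξ i ω) ∂P)
      * ∑' m, q ^ m * ∫⁻ ω, nonposPart b m (fun i => ξ i ω) ∂P := by
  rw [ennreal_tsum_mul_tsum, walkGen]
  refine tsum_congr fun n => ?_
  simp_rw [exp_pathMax_eq_sum]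
  have hmξ : ∀ k, Measurable fun ω i => ξ (k + i) ω := fun k =>
    measurable_pi_lambda _ fun i => hm _
  have hmξ0 : Measurable fun ω i => ξ i ω := measurable_pi_lambda _ fun i => hm _
  rw [lintegral_finsetSum _ fun p _ => ((measurable_ladderPart a p.1).comp hmξ0).mul
    ((measurable_nonposPart b p.2).comp (hmξ p.1)), Finset.mul_sum]
  refine Finset.sum_congr rfl fun p hp => ?_
  rw [lintegral_mul_shift hind hm hlaw (measurable_ladderPart a p.1) (measurable_nonposPart b p.2)
    (fun _ _ => ladderPart_congr a) (fun _ _ => nonposPart_congr b),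
    ← Finset.HasAntidiagonal.mem_antidiagonal.1 hp, pow_add]
  ring

/-- Wiener–Hopf factorization at an independent geometric time, in unnormalized form: the maximum
and the terminal drawdown are independent. -/
lemma walkGen_wienerHopf (hind : iIndepFun ξ P) (hm : ∀ i, Measurable (ξ i))
    (hlaw : ∀ i, P.map (ξ i) = μ) (q : ℝ≥0∞) (a b : ℝ) :
    walkGen P ξ q a b * walkGen P ξ q 0 0 = walkGen P ξ q a 0 * walkGen P ξ q 0 b := by
  simp only [walkGen_eq_mul hind hm hlaw]
  ring

end IID

/-! ### Exponential moments of the running maximum -/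

section Moments

variable {Ω : Type*} [MeasurableSpace Ω] {P : Measure Ω}
  {ξ : ℕ → Ω → ℝ} {v : ℝ≥0}

lemma lintegral_exp_gaussian {X : Ω → ℝ} (hX : Measurable X)
    (hlaw : P.map X = gaussianReal 0 v) (a : ℝ) :
    ∫⁻ ω, ENNReal.ofReal (Real.exp (a * X ω)) ∂P
      = ENNReal.ofReal (Real.exp (v * a ^ 2 / 2)) := by
  rw [← lintegral_map (μ := P) (g := X) (f := fun x => ENNReal.ofReal (Real.exp (a * x)))
    (by fun_prop) hX, hlaw, ← ofReal_integral_eq_lintegral_ofReal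
    (integrable_exp_mul_gaussianReal a) (ae_of_all _ fun _ => Real.exp_nonneg _)]
  congr 1
  have := mgf_gaussianReal (p := gaussianReal 0 v) (X := id) (μ := 0) (v := v) (by simp) a
  simpa [mgf] using this

/-- Lindley's recursion for the maximal increment up to the terminal time. -/
lemma maxIncrement_succ (y : ℕ → ℝ) (n : ℕ) :
    pathMax (fun j => walk y (n + 1) - walk y j) (n + 1)
      = max (pathMax (fun j => walk y n - walk y j) n + y n) 0 := by
  apply le_antisymm
  · refine pathMax_le fun j hj => ?_
    rcases Nat.lt_or_eq_of_le hj with h | rfl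
    · refine le_max_of_le_left ?_
      have := le_pathMax (fun j => walk y n - walk y j) (Nat.lt_succ_iff.1 h)
      rw [walk_succ]; linarith
    · simp
  · refine max_le ?_ ?_
    · obtain ⟨k, hk, h⟩ := exists_pathMax (fun j => walk y n - walk y j) n
      have := le_pathMax (fun j => walk y (n + 1) - walk y j) (hk.trans n.le_succ)
      rw [h]; rw [walk_succ] at this ⊢; linarith
    · simpa using le_pathMax (fun j => walk y (n + 1) - walk y j) (le_refl (n + 1))

lemma exp_add_exp_neg_max_le (a z : ℝ) :
    Real.exp (a * max z 0) + Real.exp (-a * max z 0) ≤ Real.exp (a * z) + Real.exp (-a * z) := by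
  rcases le_total z 0 with h | h
  · rw [max_eq_right h]
    have := Real.one_le_cosh (a * z)
    rw [Real.cosh_eq] at this
    simp only [mul_zero, Real.exp_zero, neg_mul]
    linarith
  · rw [max_eq_left h]

/-- `cosh` of Lindley's recursion grows at most geometrically, so the running maximum has
exponential moments `E[e^{a M_n}] ≤ 2 e^{n v a² / 2}`. -/
lemma lintegral_exp_pathMax_le [IsProbabilityMeasure P] (hind : iIndepFun ξ P)
    (hm : ∀ i, Measurable (ξ i))
    (hlaw : ∀ i, P.map (ξ i) = gaussianReal 0 v) (a : ℝ) (n : ℕ) :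
    ∫⁻ ω, ENNReal.ofReal (Real.exp (a * pathMax (walk fun i => ξ i ω) n)) ∂P
      ≤ 2 * ENNReal.ofReal (Real.exp (v * a ^ 2 / 2)) ^ n := by
  rw [lintegral_pathMax_reverse hind hm hlaw
    (g := fun x => ENNReal.ofReal (Real.exp (a * x))) (by fun_prop) n]
  let R : ℕ → (ℕ → ℝ) → ℝ := fun n y => pathMax (fun j => walk y n - walk y j) n
  have hR : ∀ n, Measurable (R n) := fun n =>
    measurable_pathMax (fun j => (measurable_walk n).sub (measurable_walk j)) n
  have hmξ : Measurable fun ω i => ξ i ω := measurable_pi_lambda _ fun i => hm _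
  have hRξ : ∀ n (c : ℝ), Measurable fun ω => ENNReal.ofReal (Real.exp (c * R n fun i => ξ i ω)) :=
    fun n c => (((hR n).comp hmξ).const_mul c).exp.ennreal_ofReal
  have step : ∀ n (c : ℝ),
      ∫⁻ ω, ENNReal.ofReal (Real.exp (c * (R n (fun i => ξ i ω) + ξ n ω))) ∂P
        = (∫⁻ ω, ENNReal.ofReal (Real.exp (c * R n fun i => ξ i ω)) ∂P)
          * ENNReal.ofReal (Real.exp (v * c ^ 2 / 2)) := by
    intro n c
    rw [← lintegral_exp_gaussian (hm 0) (hlaw 0) c,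
      ← lintegral_mul_shift hind hm hlaw (k := n) (m := 1)
        (F := fun y => ENNReal.ofReal (Real.exp (c * R n y)))
        (G := fun y => ENNReal.ofReal (Real.exp (c * y 0))) (by fun_prop) (by fun_prop)
        (fun y y' h => ?_) (fun y y' h => by rw [h 0 one_pos])]
    · refine lintegral_congr fun ω => ?_
      simp only [add_zero]
      rw [← ENNReal.ofReal_mul (Real.exp_nonneg _), ← Real.exp_add, mul_add]
    · have : R n y = R n y' := pathMax_congr fun j hj => by
        rw [walk_congr h, walk_congr fun i hi => h i (by omega)]
      simp only [this]
  have main : ∀ n, (∫⁻ ω, ENNReal.ofReal (Real.exp (a * R n fun i => ξ i ω)) ∂P)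
      + ∫⁻ ω, ENNReal.ofReal (Real.exp (-a * R n fun i => ξ i ω)) ∂P
      ≤ 2 * ENNReal.ofReal (Real.exp (v * a ^ 2 / 2)) ^ n := by
    intro n
    induction n with
    | zero => simp [R, pathMax, walk_zero, one_add_one_eq_two]
    | succ n ih =>
      calc (∫⁻ ω, ENNReal.ofReal (Real.exp (a * R (n + 1) fun i => ξ i ω)) ∂P)
            + ∫⁻ ω, ENNReal.ofReal (Real.exp (-a * R (n + 1) fun i => ξ i ω)) ∂P
          ≤ (∫⁻ ω, ENNReal.ofReal (Real.exp (a * (R n (fun i => ξ i ω) + ξ n ω))) ∂P)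
            + ∫⁻ ω, ENNReal.ofReal (Real.exp (-a * (R n (fun i => ξ i ω) + ξ n ω))) ∂P := by
            rw [← lintegral_add_left (hRξ _ _), ← lintegral_add_left
              (f := fun ω => ENNReal.ofReal (Real.exp (a * (R n (fun i => ξ i ω) + ξ n ω))))
              (((((hR n).comp hmξ).add (hm n)).const_mul a).exp.ennreal_ofReal)]
            refine lintegral_mono fun ω => ?_
            rw [← ENNReal.ofReal_add (Real.exp_nonneg _) (Real.exp_nonneg _),
              ← ENNReal.ofReal_add (Real.exp_nonneg _) (Real.exp_nonneg _)]
            refine ENNReal.ofReal_le_ofReal ?_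
            simp only [R, maxIncrement_succ]
            exact exp_add_exp_neg_max_le a _
        _ = ((∫⁻ ω, ENNReal.ofReal (Real.exp (a * R n fun i => ξ i ω)) ∂P)
            + ∫⁻ ω, ENNReal.ofReal (Real.exp (-a * R n fun i => ξ i ω)) ∂P)
            * ENNReal.ofReal (Real.exp (v * a ^ 2 / 2)) := by
            rw [step, step, neg_sq, add_mul]
        _ ≤ _ := by
            rw [pow_succ (ENNReal.ofReal _), ← mul_assoc]
            exact mul_le_mul_left ih _
  exact le_self_add.trans (main n)

end Moments

/-! ### Brownian motion sampled on a grid -/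

/-- Standard Brownian motion with index set `ℝ`; only nonnegative times are constrained, apart from
measurability and continuity. -/
structure IsStdBM {Ω : Type*} [MeasurableSpace Ω] (P : Measure Ω) (V : ℝ → Ω → ℝ) : Prop where
  meas : ∀ t, Measurable (V t)
  zero : ∀ ω, V 0 ω = 0
  cont : ∀ ω, Continuous fun t => V t ω
  indep : ∀ s t : ℝ, 0 ≤ s → s ≤ t → ∀ (m : ℕ) (v : Fin m → ℝ), (∀ i, 0 ≤ v i ∧ v i ≤ s) →
    IndepFun (fun ω => V t ω - V s ω) (fun ω i => V (v i) ω) P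
  gauss : ∀ s t : ℝ, 0 ≤ s → s ≤ t →
    Measure.map (fun ω => V t ω - V s ω) P = gaussianReal 0 (Real.toNNReal (t - s))

/-- Increments of a process over the grid of mesh `h`. -/
def gridStep {Ω : Type*} (V : ℝ → Ω → ℝ) (h : ℝ) (i : ℕ) (ω : Ω) : ℝ :=
  V ((i + 1 : ℕ) * h) ω - V (i * h) ω

section Grid

variable {Ω : Type*} [MeasurableSpace Ω] {P : Measure Ω}
  {V : ℝ → Ω → ℝ} {h : ℝ}

lemma IsStdBM.neg (hV : IsStdBM P V) : IsStdBM P (fun t ω => -V t ω) where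
  meas t := (hV.meas t).neg
  zero ω := by simp [hV.zero]
  cont ω := (hV.cont ω).neg
  indep s t hs hst m v hv := by
    have := (hV.indep s t hs hst m v hv).comp (φ := fun x => -x)
      (ψ := fun (y : Fin m → ℝ) i => -y i) measurable_neg (by fun_prop)
    convert! this using 1
    funext ω
    simp only [Function.comp_apply]; ring
  gauss s t hs hst := by
    have h1 : (fun ω => -V t ω - -V s ω) = (fun x => -x) ∘ fun ω => V t ω - V s ω := by
      funext ω; simp only [Function.comp_apply]; ring
    rw [h1, ← Measure.map_map (f := fun ω => V t ω - V s ω) measurable_neg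
      ((hV.meas t).sub (hV.meas s)), hV.gauss s t hs hst,
      gaussianReal_map_neg, neg_zero]

lemma walk_gridStep (hV : IsStdBM P V) (k : ℕ) (ω : Ω) :
    walk (fun i => gridStep V h i ω) k = V (k * h) ω := by
  have := Finset.sum_range_sub (fun i : ℕ => V (i * h) ω) k
  simpa [walk, gridStep, hV.zero] using this

lemma measurable_gridStep (hV : IsStdBM P V) (i : ℕ) : Measurable (gridStep V h i) :=
  (hV.meas _).sub (hV.meas _)

lemma map_gridStep (hV : IsStdBM P V) (hh : 0 ≤ h) (i : ℕ) :
    P.map (gridStep V h i) = gaussianReal 0 h.toNNReal := by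
  have := hV.gauss (i * h) ((i + 1 : ℕ) * h) (by positivity)
    (by push_cast; nlinarith)
  have e : ((i + 1 : ℕ) : ℝ) * h - i * h = h := by push_cast; ring
  rw [e] at this
  exact this

lemma map_gridStep_vec [IsProbabilityMeasure P] (hV : IsStdBM P V) (hh : 0 ≤ h) (n : ℕ) :
    P.map (fun ω (i : Fin n) => gridStep V h i ω)
      = Measure.pi fun _ => gaussianReal 0 h.toNNReal := by
  induction n with
  | zero =>
    have : IsProbabilityMeasure (P.map fun ω (i : Fin 0) => gridStep V h i ω) :=
      Measure.isProbabilityMeasure_map (measurable_pi_lambda _ fun i => i.elim0).aemeasurable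
    rw [Measure.pi_of_empty]
    ext s hs
    rcases s.eq_empty_or_nonempty with rfl | ⟨x, hx⟩
    · simp
    · have : s = univ := by
        ext y; simp [Subsingleton.elim y x, hx]
      subst this
      simp
  | succ n ih =>
    have hvec : Measurable fun ω (i : Fin n) => gridStep V h i ω :=
      measurable_pi_lambda _ fun i => measurable_gridStep hV i
    -- the last step is independent of the grid values up to its left endpoint
    have hind : IndepFun (gridStep V h n) (fun ω (i : Fin n) => gridStep V h i ω) P := by
      have h0 := hV.indep (n * h) ((n + 1 : ℕ) * h) (by positivity) (by push_cast; nlinarith)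
        (n + 1) (fun i => (i : ℕ) * h) (fun i => ⟨by positivity, by
          have : ((i : ℕ) : ℝ) ≤ n := by exact_mod_cast Nat.lt_succ_iff.1 i.2
          gcongr⟩)
      exact h0.comp (φ := id) (ψ := fun (y : Fin (n + 1) → ℝ) (i : Fin n) =>
        y i.succ - y i.castSucc) measurable_id (by fun_prop)
    have hpair := (indepFun_iff_map_prod_eq_prod_map_map (measurable_gridStep hV n).aemeasurable
      hvec.aemeasurable).1 hind
    rw [ih, map_gridStep hV hh] at hpair
    have hmp := (measurePreserving_piFinSuccAbove
      (fun _ : Fin (n + 1) => gaussianReal 0 h.toNNReal) (Fin.last n)).symm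
    rw [← hmp.map_eq, ← hpair, Measure.map_map (MeasurableEquiv.measurable _)
      ((measurable_gridStep hV n).prodMk hvec)]
    congr 1
    funext ω i
    simp only [Function.comp_apply, MeasurableEquiv.piFinSuccAbove_symm_apply]
    refine Fin.lastCases ?_ (fun i => ?_) i
    · simp [Fin.insertNthEquiv]
    · simp [Fin.insertNthEquiv]

/-- Independence of a sequence is independence of its finite initial segments. -/
lemma iIndepFun_of_forall_fin {Ω : Type*} [MeasurableSpace Ω] {P : Measure Ω} {ξ : ℕ → Ω → ℝ}
    (hfin : ∀ n, iIndepFun (fun i : Fin n => ξ i) P) : iIndepFun ξ P := by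
  refine iIndepFun_iff_finset.2 fun s => ?_
  obtain ⟨N, hN⟩ : ∃ N, ∀ x ∈ s, x < N :=
    ⟨s.sup id + 1, fun x hx => Nat.lt_succ_of_le (Finset.le_sup (f := id) hx)⟩
  have hg : Function.Injective (fun x : s => (⟨x, hN x x.2⟩ : Fin N)) :=
    fun x y hxy => Subtype.ext (Fin.mk.inj_iff.1 hxy)
  have h := iIndepFun.precomp hg (hfin N)
  exact h

lemma iIndepFun_gridStep [IsProbabilityMeasure P] (hV : IsStdBM P V) (hh : 0 ≤ h) :
    iIndepFun (gridStep V h) P := by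
  refine iIndepFun_of_forall_fin fun n => ?_
  rw [iIndepFun_iff_map_fun_eq_pi_map fun i => (measurable_gridStep hV _).aemeasurable,
    map_gridStep_vec hV hh]
  congr 1
  funext i
  rw [map_gridStep hV hh]

end Grid

/-! ### Passage from the grid to continuous time -/

/-- Running maximum `sup_{0 ≤ s ≤ t} f s`; meaningful for continuous `f` and `0 ≤ t`. -/
def runMax (f : ℝ → ℝ) (t : ℝ) : ℝ := sSup (f '' Set.Icc 0 t)

lemma exists_runMax {f : ℝ → ℝ} (hf : Continuous f) {t : ℝ} (ht : 0 ≤ t) :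
    ∃ s ∈ Set.Icc 0 t, runMax f t = f s ∧ ∀ u ∈ Set.Icc 0 t, f u ≤ f s := by
  obtain ⟨s, hs, hmax⟩ := isCompact_Icc.exists_isMaxOn (nonempty_Icc.2 ht) hf.continuousOn
  exact ⟨s, hs, IsGreatest.csSup_eq ⟨mem_image_of_mem f hs, forall_mem_image.2 hmax⟩, hmax⟩

lemma le_runMax {f : ℝ → ℝ} (hf : Continuous f) {t u : ℝ} (hu : u ∈ Set.Icc 0 t) :
    f u ≤ runMax f t := by
  obtain ⟨s, _, h, hmax⟩ := exists_runMax hf (hu.1.trans hu.2)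
  exact h ▸ hmax u hu

lemma sSup_exp_image {f : ℝ → ℝ} (hf : Continuous f) {t : ℝ} (ht : 0 ≤ t) {c : ℝ} (hc : 0 ≤ c) :
    sSup ((fun s => Real.exp (c * f s)) '' Set.Icc 0 t) = Real.exp (c * runMax f t) := by
  obtain ⟨s, hs, h, hmax⟩ := exists_runMax hf ht
  rw [h]
  refine IsGreatest.csSup_eq ⟨⟨s, hs, rfl⟩, forall_mem_image.2 fun u hu => ?_⟩
  exact Real.exp_le_exp.2 (mul_le_mul_of_nonneg_left (hmax u hu) hc)

lemma sInf_exp_image {f : ℝ → ℝ} (hf : Continuous f) {t : ℝ} (ht : 0 ≤ t) {c : ℝ} (hc : 0 ≤ c) :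
    sInf ((fun s => Real.exp (-c * f s)) '' Set.Icc 0 t) = Real.exp (-c * runMax f t) := by
  obtain ⟨s, hs, h, hmax⟩ := exists_runMax hf ht
  rw [h]
  refine IsLeast.csInf_eq ⟨⟨s, hs, rfl⟩, forall_mem_image.2 fun u hu => ?_⟩
  exact Real.exp_le_exp.2 (by nlinarith [hmax u hu])

/-- `e^{-rt} e^{a M_t - b (M_t - f t)}` with `M` the running maximum of the path `f`. -/
def contF (r a b : ℝ) (f : ℝ → ℝ) (t : ℝ) : ℝ≥0∞ :=
  ENNReal.ofReal (Real.exp (-r * t + (a * runMax f t - b * (runMax f t - f t))))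

/-- The version of `contF` in which the path is observed on the grid of mesh `h` only and time is
rounded down to the grid. -/
def gridF (r h a b : ℝ) (f : ℝ → ℝ) (t : ℝ) : ℝ≥0∞ :=
  ENNReal.ofReal (Real.exp (-r * (⌊t / h⌋₊ * h) + (a * pathMax (fun j => f (j * h)) ⌊t / h⌋₊
    - b * (pathMax (fun j => f (j * h)) ⌊t / h⌋₊ - f (⌊t / h⌋₊ * h)))))

lemma floor_mul_le {h t : ℝ} (hh : 0 < h) (ht : 0 ≤ t) : ⌊t / h⌋₊ * h ≤ t :=
  (le_div_iff₀ hh).1 (Nat.floor_le (div_nonneg ht hh.le))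

lemma lt_floor_mul_add {h : ℝ} (hh : 0 < h) (t : ℝ) : t < ⌊t / h⌋₊ * h + h := by
  have := (div_lt_iff₀ hh).1 (Nat.lt_floor_add_one (t / h))
  linarith

/-- The mesh `1 / (N + 1)`. -/
def mesh (N : ℕ) : ℝ := 1 / ((N : ℝ) + 1)

lemma mesh_pos (N : ℕ) : 0 < mesh N := by unfold mesh; positivity

lemma mesh_le_one (N : ℕ) : mesh N ≤ 1 := by
  unfold mesh
  rw [div_le_one (by positivity)]
  linarith [(Nat.cast_nonneg N : (0 : ℝ) ≤ N)]

lemma tendsto_mesh : Tendsto mesh atTop (nhds 0) := tendsto_one_div_add_atTop_nhds_zero_nat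

lemma tendsto_floor_mul_mesh {t : ℝ} (ht : 0 ≤ t) :
    Tendsto (fun N => ⌊t / mesh N⌋₊ * mesh N) atTop (nhds t) := by
  refine tendsto_of_tendsto_of_tendsto_of_le_of_le (g := fun N => t - mesh N)
    (by simpa using tendsto_const_nhds.sub tendsto_mesh) tendsto_const_nhds (fun N => ?_)
    (fun N => floor_mul_le (mesh_pos N) ht)
  simp only
  linarith [lt_floor_mul_add (mesh_pos N) t]

lemma gridMax_le_runMax {f : ℝ → ℝ} (hf : Continuous f) {h t : ℝ} (hh : 0 < h) (ht : 0 ≤ t) :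
    pathMax (fun j => f (j * h)) ⌊t / h⌋₊ ≤ runMax f t :=
  pathMax_le fun j hj => le_runMax hf ⟨by positivity, le_trans
    (mul_le_mul_of_nonneg_right (by exact_mod_cast hj) hh.le) (floor_mul_le hh ht)⟩

lemma tendsto_gridMax {f : ℝ → ℝ} (hf : Continuous f) {t : ℝ} (ht : 0 ≤ t) :
    Tendsto (fun N => pathMax (fun j => f (j * mesh N)) ⌊t / mesh N⌋₊) atTop
      (nhds (runMax f t)) := by
  obtain ⟨s, hs, h, -⟩ := exists_runMax hf ht
  refine tendsto_of_tendsto_of_tendsto_of_le_of_le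
    (g := fun N => f (⌊s / mesh N⌋₊ * mesh N)) (h := fun _ => runMax f t) ?_
    tendsto_const_nhds (fun N => ?_) (fun N => gridMax_le_runMax hf (mesh_pos N) ht)
  · rw [h]
    exact (hf.tendsto s).comp (tendsto_floor_mul_mesh hs.1)
  · exact le_pathMax (fun j : ℕ => f (j * mesh N))
      (Nat.floor_mono (div_le_div_of_nonneg_right hs.2 (mesh_pos N).le))

lemma tendsto_gridF {f : ℝ → ℝ} (hf : Continuous f) {t : ℝ} (ht : 0 ≤ t) (r a b : ℝ) :
    Tendsto (fun N => gridF r (mesh N) a b f t) atTop (nhds (contF r a b f t)) := by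
  have h1 := tendsto_floor_mul_mesh ht
  have h2 := tendsto_gridMax hf ht
  have h3 := (hf.tendsto t).comp h1
  exact ENNReal.tendsto_ofReal ((Real.continuous_exp.tendsto _).comp
    ((h1.const_mul (-r)).add ((h2.const_mul a).sub ((h2.sub h3).const_mul b))))

lemma gridF_le {f : ℝ → ℝ} (hf : Continuous f) (hf0 : f 0 = 0) {r h a a' b t : ℝ} (hr : 0 ≤ r)
    (hh : 0 < h) (hh1 : h ≤ 1) (ha : a ≤ a') (ha' : 0 ≤ a') (hb : 0 ≤ b) (ht : 0 ≤ t) :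
    gridF r h a b f t ≤ ENNReal.ofReal (Real.exp r) * contF r a' 0 f t := by
  rw [gridF, contF, ← ENNReal.ofReal_mul (Real.exp_nonneg _), ← Real.exp_add]
  refine ENNReal.ofReal_le_ofReal (Real.exp_le_exp.2 ?_)
  have h1 := lt_floor_mul_add hh t
  have h2 := gridMax_le_runMax hf hh ht
  have h3 := le_pathMax (fun j : ℕ => f (j * h)) (Nat.zero_le ⌊t / h⌋₊)
  have h4 := le_pathMax (fun j : ℕ => f (j * h)) (le_refl ⌊t / h⌋₊)
  simp only [Nat.cast_zero, zero_mul, hf0] at h3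
  generalize pathMax (fun j => f (j * h)) ⌊t / h⌋₊ = m at *
  have e1 : a * m ≤ a' * runMax f t :=
    (mul_le_mul_of_nonneg_right ha h3).trans (mul_le_mul_of_nonneg_left h2 ha')
  have e2 : 0 ≤ b * (m - f (⌊t / h⌋₊ * h)) := mul_nonneg hb (sub_nonneg.2 h4)
  have e3 : r * (t - ⌊t / h⌋₊ * h) ≤ r * 1 := mul_le_mul_of_nonneg_left (by linarith) hr
  linarith

/-- Integrating a function of the rounded time. -/
lemma lintegral_floor {h : ℝ} (hh : 0 < h) (F : ℕ → ℝ≥0∞) :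
    ∫⁻ t in Set.Ioi (0 : ℝ), F ⌊t / h⌋₊ = ENNReal.ofReal h * ∑' n, F n := by
  have hm : Measurable fun t : ℝ => ⌊t / h⌋₊ := Nat.measurable_floor.comp (by fun_prop)
  have hvol : ∀ n : ℕ, (volume.restrict (Set.Ioi (0 : ℝ))).map (fun t : ℝ => ⌊t / h⌋₊) {n}
      = ENNReal.ofReal h := by
    intro n
    rw [Measure.map_apply hm (measurableSet_singleton n)]
    have : volume.restrict (Set.Ioi (0 : ℝ)) = volume.restrict (Set.Ici (0 : ℝ)) :=
      Measure.restrict_congr_set Ioi_ae_eq_Ici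
    rw [this, Measure.restrict_apply (hm (measurableSet_singleton n))]
    have hset : (fun t : ℝ => ⌊t / h⌋₊) ⁻¹' {n} ∩ Set.Ici 0 = Set.Ico (n * h) (n * h + h) := by
      ext t
      simp only [mem_inter_iff, mem_preimage, mem_singleton_iff, mem_Ici, mem_Ico]
      constructor
      · rintro ⟨rfl, ht⟩
        exact ⟨floor_mul_le hh ht, lt_floor_mul_add hh t⟩
      · rintro ⟨h1, h2⟩
        have ht : 0 ≤ t := le_trans (by positivity) h1
        refine ⟨(Nat.floor_eq_iff (div_nonneg ht hh.le)).2 ⟨(le_div_iff₀ hh).2 h1, ?_⟩, ht⟩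
        rw [div_lt_iff₀ hh]; linarith
    rw [hset, Real.volume_Ico]
    congr 1; ring
  rw [← lintegral_map (f := F) (g := fun t : ℝ => ⌊t / h⌋₊) (measurable_of_countable F) hm,
    lintegral_countable']
  simp_rw [hvol]
  rw [ENNReal.tsum_mul_right, mul_comm]

section Limit

variable {Ω : Type*} [MeasurableSpace Ω] {P : Measure Ω} {V : ℝ → Ω → ℝ}

/-- `E ∫_0^∞ e^{-rt} e^{a M_t - b (M_t - V_t)} dt` with `M` the running maximum of `V`. -/
def expInt (P : Measure Ω) (V : ℝ → Ω → ℝ) (r a b : ℝ) : ℝ≥0∞ :=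
  ∫⁻ p, contF r a b (fun s => V s p.1) p.2 ∂(P.prod (volume.restrict (Set.Ioi (0 : ℝ))))

/-- Grid approximation of `expInt`. -/
def gridInt (P : Measure Ω) (V : ℝ → Ω → ℝ) (r h a b : ℝ) : ℝ≥0∞ :=
  ∫⁻ p, gridF r h a b (fun s => V s p.1) p.2 ∂(P.prod (volume.restrict (Set.Ioi (0 : ℝ))))

lemma measurable_gridF (hV : IsStdBM P V) (r h a b : ℝ) :
    Measurable fun p : Ω × ℝ => gridF r h a b (fun s => V s p.1) p.2 := by
  let G : ℕ × Ω → ℝ≥0∞ := fun q => ENNReal.ofReal (Real.exp (-r * (q.1 * h)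
      + (a * pathMax (fun j => V (j * h) q.2) q.1
        - b * (pathMax (fun j => V (j * h) q.2) q.1 - V (q.1 * h) q.2))))
  have hG : Measurable G := by
    refine measurable_from_prod_countable_right fun k => ?_
    have h1 : Measurable fun ω => pathMax (fun j => V (j * h) ω) k :=
      measurable_pathMax (fun j : ℕ => hV.meas (j * h)) k
    have h2 := hV.meas (k * h)
    have h3 : Measurable fun ω => -r * (k * h) + (a * pathMax (fun j => V (j * h) ω) k
        - b * (pathMax (fun j => V (j * h) ω) k - V (k * h) ω)) :=
      ((h1.const_mul a).sub ((h1.sub h2).const_mul b)).const_add _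
    exact h3.exp.ennreal_ofReal
  have hfl : Measurable fun p : Ω × ℝ => (⌊p.2 / h⌋₊, p.1) :=
    (Nat.measurable_floor.comp (measurable_snd.div_const h)).prodMk measurable_fst
  have he : (fun p : Ω × ℝ => gridF r h a b (fun s => V s p.1) p.2)
      = fun p => G (⌊p.2 / h⌋₊, p.1) := by
    funext p
    simp only [gridF, G]
  rw [he]
  exact hG.comp hfl

lemma ae_snd_pos [SFinite P] :
    ∀ᵐ p ∂(P.prod (volume.restrict (Set.Ioi (0 : ℝ)))), (0 : ℝ) < p.2 := by
  have h : ∀ᵐ t ∂(volume.restrict (Set.Ioi (0 : ℝ))), (0 : ℝ) < t := by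
    filter_upwards [ae_restrict_mem measurableSet_Ioi] with t ht
    exact ht
  have hq : Measure.QuasiMeasurePreserving (Prod.snd : Ω × ℝ → ℝ)
      (P.prod (volume.restrict (Set.Ioi (0 : ℝ)))) (volume.restrict (Set.Ioi (0 : ℝ))) :=
    Measure.quasiMeasurePreserving_snd
  exact hq.ae h

lemma aemeasurable_contF [SFinite P] (hV : IsStdBM P V) (r a b : ℝ) :
    AEMeasurable (fun p : Ω × ℝ => contF r a b (fun s => V s p.1) p.2)
      (P.prod (volume.restrict (Set.Ioi (0 : ℝ)))) := by
  have hm : ∀ N, AEMeasurable (fun p : Ω × ℝ => gridF r (mesh N) a b (fun s => V s p.1) p.2)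
      (P.prod (volume.restrict (Set.Ioi (0 : ℝ)))) :=
    fun N => (measurable_gridF hV r (mesh N) a b).aemeasurable
  have ht : ∀ᵐ p ∂(P.prod (volume.restrict (Set.Ioi (0 : ℝ)))),
      Tendsto (fun N => gridF r (mesh N) a b (fun s => V s p.1) p.2) atTop
        (nhds (contF r a b (fun s => V s p.1) p.2)) := by
    filter_upwards [ae_snd_pos] with p hp
    exact tendsto_gridF (hV.cont p.1) hp.le r a b
  exact aemeasurable_of_tendsto_metrizable_ae atTop hm ht

/-- The grid integrals are generating functions of random walks. -/
lemma gridInt_eq [SFinite P] (hV : IsStdBM P V) (r a b : ℝ) {h : ℝ} (hh : 0 < h) :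
    gridInt P V r h a b = ENNReal.ofReal h
      * walkGen P (gridStep V h) (ENNReal.ofReal (Real.exp (-r * h))) a b := by
  rw [gridInt, lintegral_prod_symm _ (measurable_gridF hV r h a b).aemeasurable, walkGen]
  simp only [gridF]
  rw [lintegral_floor hh (fun k => ∫⁻ ω, ENNReal.ofReal (Real.exp (-r * (k * h)
      + (a * pathMax (fun j => V (j * h) ω) k
        - b * (pathMax (fun j => V (j * h) ω) k - V (k * h) ω)))) ∂P)]
  congr 1
  refine tsum_congr fun k => ?_
  have hw : ∀ ω, (walk fun i => gridStep V h i ω) = fun j : ℕ => V (j * h) ω := fun ω =>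
    funext fun j => walk_gridStep hV j ω
  rw [← lintegral_const_mul' _ _ (ENNReal.pow_ne_top ENNReal.ofReal_ne_top)]
  refine lintegral_congr fun ω => ?_
  rw [hw ω, ← ENNReal.ofReal_pow (Real.exp_nonneg _), ← Real.exp_nat_mul,
    ← ENNReal.ofReal_mul (Real.exp_nonneg _), ← Real.exp_add]
  congr 3; ring

lemma tendsto_gridInt [SFinite P] (hV : IsStdBM P V) {r a a' b : ℝ} (hr : 0 ≤ r) (ha : a ≤ a')
    (ha' : 0 ≤ a') (hb : 0 ≤ b) (hfin : expInt P V r a' 0 ≠ ⊤) :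
    Tendsto (fun N => gridInt P V r (mesh N) a b) atTop (nhds (expInt P V r a b)) := by
  refine tendsto_lintegral_of_dominated_convergence
    (fun p => ENNReal.ofReal (Real.exp r) * contF r a' 0 (fun s => V s p.1) p.2)
    (fun N => measurable_gridF hV r (mesh N) a b) (fun N => ?_) ?_ ?_
  · filter_upwards [ae_snd_pos] with p hp
    exact gridF_le (hV.cont p.1) (hV.zero p.1) hr (mesh_pos N) (mesh_le_one N) ha ha' hb hp.le
  · rw [lintegral_const_mul' _ _ ENNReal.ofReal_ne_top]
    exact ENNReal.mul_ne_top ENNReal.ofReal_ne_top hfin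
  · filter_upwards [ae_snd_pos] with p hp
    exact tendsto_gridF (hV.cont p.1) hp.le r a b

/-- The hypothesis `a² < 2r` makes the discounted exponential moment of the maximum finite. -/
lemma expInt_ne_top [IsProbabilityMeasure P] (hV : IsStdBM P V) {r a : ℝ} (hra : a ^ 2 < 2 * r) :
    expInt P V r a 0 ≠ ⊤ := by
  set c : ℝ := r - a ^ 2 / 2 with hc
  have hc0 : 0 < c := by rw [hc]; linarith
  have hbound : ∀ N, gridInt P V r (mesh N) a 0 ≤ ENNReal.ofReal (2 * (Real.exp c / c)) := by
    intro N
    have hh := mesh_pos N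
    have hh1 := mesh_le_one N
    generalize mesh N = h at *
    have hy : 0 < c * h := mul_pos hc0 hh
    have hlt : Real.exp (-(c * h)) < 1 := Real.exp_lt_one_iff.2 (by linarith)
    rw [gridInt_eq hV r a 0 hh]
    have hgen : walkGen P (gridStep V h) (ENNReal.ofReal (Real.exp (-r * h))) a 0
        ≤ 2 * (1 - ENNReal.ofReal (Real.exp (-(c * h))))⁻¹ := by
      rw [← ENNReal.tsum_geometric, ← ENNReal.tsum_mul_left, walkGen]
      refine ENNReal.tsum_le_tsum fun n => ?_
      simp only [zero_mul, sub_zero]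
      refine (mul_le_mul_right (lintegral_exp_pathMax_le (iIndepFun_gridStep hV hh.le)
        (measurable_gridStep hV) (map_gridStep hV hh.le) a n) _).trans_eq ?_
      rw [mul_left_comm, ← mul_pow, ← ENNReal.ofReal_mul (Real.exp_nonneg _), ← Real.exp_add,
        Real.coe_toNNReal h hh.le]
      congr 4; rw [hc]; ring
    refine (mul_le_mul_right hgen _).trans ?_
    rw [← ENNReal.ofReal_one, ← ENNReal.ofReal_sub _ (Real.exp_nonneg _),
      ← ENNReal.ofReal_inv_of_pos (by linarith), show (2 : ℝ≥0∞) = ENNReal.ofReal 2 by simp,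
      ← ENNReal.ofReal_mul (by norm_num), ← ENNReal.ofReal_mul hh.le]
    refine ENNReal.ofReal_le_ofReal ?_
    -- `1 - e^{-y} ≥ y e^{-y}` with `y = c h ≤ c`
    have h1 : c * h * Real.exp (-c) ≤ 1 - Real.exp (-(c * h)) := by
      have e1 := Real.add_one_le_exp (c * h)
      have e2 : Real.exp (-c) ≤ Real.exp (-(c * h)) := Real.exp_le_exp.2 (by nlinarith)
      have e3 : Real.exp (c * h) * Real.exp (-(c * h)) = 1 := by rw [← Real.exp_add]; simp
      nlinarith [Real.exp_pos (-(c * h))]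
    have h2 : (1 - Real.exp (-(c * h)))⁻¹ ≤ (c * h * Real.exp (-c))⁻¹ :=
      inv_anti₀ (by positivity) h1
    calc h * (2 * (1 - Real.exp (-(c * h)))⁻¹) ≤ h * (2 * (c * h * Real.exp (-c))⁻¹) := by gcongr
      _ = 2 * (Real.exp c / c) := by rw [Real.exp_neg]; field_simp
  have hfatou : expInt P V r a 0
      ≤ liminf (fun N => gridInt P V r (mesh N) a 0) atTop := by
    refine le_trans (lintegral_mono_ae ?_) (lintegral_liminf_le fun N =>
      measurable_gridF hV r (mesh N) a 0)
    filter_upwards [ae_snd_pos] with p hp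
    exact (tendsto_gridF (hV.cont p.1) hp.le r a 0).liminf_eq.ge
  refine ne_top_of_le_ne_top ENNReal.ofReal_ne_top (hfatou.trans
    (liminf_le_of_frequently_le' (Frequently.of_forall hbound)))

lemma expInt_zero [IsProbabilityMeasure P] (hV : IsStdBM P V) {r : ℝ} (hr : 0 < r) :
    expInt P V r 0 0 = ENNReal.ofReal (1 / r) := by
  rw [expInt, lintegral_prod _ (aemeasurable_contF hV r 0 0)]
  simp only [contF, zero_mul, sub_zero, add_zero, lintegral_const, measure_univ, mul_one]
  rw [← ofReal_integral_eq_lintegral_ofReal (exp_neg_integrableOn_Ioi 0 hr)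
    (ae_of_all _ fun _ => Real.exp_nonneg _), integral_exp_mul_Ioi (by linarith)]
  congr 1
  simp [neg_div_neg_eq]

lemma expInt_ne_zero [IsProbabilityMeasure P] (hV : IsStdBM P V) (r a b : ℝ) :
    expInt P V r a b ≠ 0 := by
  rw [expInt, Ne, lintegral_eq_zero_iff' (aemeasurable_contF hV r a b)]
  intro h
  have hne : P.prod (volume.restrict (Set.Ioi (0 : ℝ))) ≠ 0 := by
    intro h0
    have h1 := Measure.prod_prod (μ := P) (ν := volume.restrict (Set.Ioi (0 : ℝ))) univ univ
    rw [h0] at h1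
    simp at h1
  have : (ae (P.prod (volume.restrict (Set.Ioi (0 : ℝ))))).NeBot := ae_neBot.2 hne
  obtain ⟨p, hp⟩ := h.exists
  exact (ENNReal.ofReal_pos.2 (Real.exp_pos _)).ne' hp

/-- Wiener–Hopf factorization for Brownian motion: at an independent exponential time, the maximum
and the drawdown from the maximum are independent. -/
lemma expInt_wienerHopf [IsProbabilityMeasure P] (hV : IsStdBM P V) {r a b : ℝ} (hr : 0 < r)
    (ha : 0 ≤ a) (hb : 0 ≤ b) (hra : a ^ 2 < 2 * r) :
    expInt P V r a b * expInt P V r 0 0 = expInt P V r a 0 * expInt P V r 0 b := by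
  have hA := expInt_ne_top hV hra
  have h0 : expInt P V r 0 0 ≠ ⊤ := by rw [expInt_zero hV hr]; exact ENNReal.ofReal_ne_top
  have t1 := tendsto_gridInt hV hr.le le_rfl ha hb hA
  have t2 := tendsto_gridInt hV hr.le le_rfl le_rfl le_rfl h0
  have t3 := tendsto_gridInt hV hr.le le_rfl ha le_rfl hA
  have t4 := tendsto_gridInt hV hr.le le_rfl le_rfl hb h0
  have n1 := expInt_ne_zero hV r
  refine tendsto_nhds_unique (ENNReal.Tendsto.mul t1 (.inl (n1 a b)) t2 (.inl (n1 0 0))) ?_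
  refine (ENNReal.Tendsto.mul t3 (.inl (n1 a 0)) t4 (.inl (n1 0 b))).congr fun N => ?_
  have hh := mesh_pos N
  simp only [gridInt_eq hV r _ _ hh]
  have := walkGen_wienerHopf (iIndepFun_gridStep hV hh.le) (measurable_gridStep hV)
    (map_gridStep hV hh.le) (ENNReal.ofReal (Real.exp (-r * mesh N))) a b
  rw [mul_mul_mul_comm, ← this, mul_mul_mul_comm]

/-- Time reversal: the drawdown of `-V` from its running maximum has the law of the running
maximum of `V`. -/
lemma expInt_neg_drawdown [IsProbabilityMeasure P] (hV : IsStdBM P V) {r b : ℝ} (hr : 0 < r)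
    (hb : 0 ≤ b) :
    expInt P (fun t ω => -V t ω) r 0 b = expInt P V r (-b) 0 := by
  have h0 : ∀ {U : ℝ → Ω → ℝ}, IsStdBM P U → expInt P U r 0 0 ≠ ⊤ := fun hU => by
    rw [expInt_zero hU hr]; exact ENNReal.ofReal_ne_top
  have t1 := tendsto_gridInt hV.neg hr.le le_rfl le_rfl hb (h0 hV.neg)
  have t2 := tendsto_gridInt hV (a := -b) hr.le (neg_nonpos.2 hb) le_rfl le_rfl (h0 hV)
  refine tendsto_nhds_unique t1 (t2.congr fun N => ?_)
  have hh := mesh_pos N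
  simp only [gridInt_eq hV.neg r _ _ hh, gridInt_eq hV r _ _ hh, walkGen]
  congr 1
  refine tsum_congr fun n => ?_
  congr 1
  simp only [zero_mul, sub_zero]
  rw [lintegral_pathMax_reverse (iIndepFun_gridStep hV hh.le) (measurable_gridStep hV)
    (map_gridStep hV hh.le) (g := fun x => ENNReal.ofReal (Real.exp (-b * x))) (by fun_prop) n]
  refine lintegral_congr fun ω => ?_
  have hw : (walk fun i => gridStep V (mesh N) i ω) = fun j : ℕ => V (j * mesh N) ω :=
    funext fun j => walk_gridStep hV j ω
  have hw' : (walk fun i => gridStep (fun t ω => -V t ω) (mesh N) i ω)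
      = fun j : ℕ => -V (j * mesh N) ω := funext fun j => walk_gridStep hV.neg j ω
  have := pathMax_add_const (fun j : ℕ => -V (j * mesh N) ω) n (V (n * mesh N) ω)
  simp only [hw, hw', sub_neg_eq_add, ← this]
  congr 2
  rw [zero_sub, neg_mul]
  congr 3
  funext j; ring

end Limit

/-! ### The ratio of the two constants -/

section Final

variable {Ω : Type*} [MeasurableSpace Ω] {P : Measure Ω} {V : ℝ → Ω → ℝ}

/-- A nonnegative drawdown penalty can only decrease the integral. -/
lemma expInt_le [SFinite P] (hV : IsStdBM P V) (r a : ℝ) {b : ℝ} (hb : 0 ≤ b) :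
    expInt P V r a b ≤ expInt P V r a 0 := by
  refine lintegral_mono_ae ?_
  filter_upwards [ae_snd_pos] with p hp
  refine ENNReal.ofReal_le_ofReal (Real.exp_le_exp.2 ?_)
  have h1 := le_runMax (hV.cont p.1) (right_mem_Icc.2 hp.le)
  have h2 := mul_nonneg hb (sub_nonneg.2 h1)
  linarith

/-- Iterated integrals of multiples of `contF` in terms of `expInt`. -/
lemma lintegral_eq_expInt [SFinite P] (hV : IsStdBM P V) {r a b C : ℝ} (hC : 0 ≤ C)
    (F : ℝ → Ω → ℝ)
    (hF : ∀ t, 0 < t → ∀ ω, F t ω = C * Real.exp (-r * t +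
      (a * runMax (fun s => V s ω) t - b * (runMax (fun s => V s ω) t - V t ω)))) :
    ∫⁻ ω, ∫⁻ t in Set.Ioi (0 : ℝ), ENNReal.ofReal (F t ω) ∂volume ∂P
      = ENNReal.ofReal C * expInt P V r a b := by
  rw [expInt, lintegral_prod _ (aemeasurable_contF hV r a b),
    ← lintegral_const_mul' _ _ ENNReal.ofReal_ne_top]
  refine lintegral_congr fun ω => ?_
  rw [← lintegral_const_mul' _ _ ENNReal.ofReal_ne_top]
  refine setLIntegral_congr_fun measurableSet_Ioi fun t ht => ?_
  simp only [contF]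
  rw [hF t ht ω, ENNReal.ofReal_mul hC]

lemma bsTheta_eq (hV : IsStdBM P V) {α β σ t : ℝ} (ha : 0 ≤ σ * α / (1 - α - β)) (ht : 0 ≤ t)
    (ω : Ω) : bsTheta V α β σ t ω
      = Real.exp (σ * α / (1 - α - β) * runMax (fun s => -V s ω) t) := by
  have := sSup_exp_image (hV.neg.cont ω) ht ha
  simpa only [bsTheta, mul_neg, neg_mul] using this

lemma bsI2_eq [SFinite P] (hV : IsStdBM P V) {α β σ r : ℝ} (ha : 0 ≤ σ * α / (1 - α - β))
    (hr : 0 ≤ r) : bsI2 P V α β σ r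
      = ENNReal.ofReal r * expInt P (fun t ω => -V t ω) r (σ * α / (1 - α - β)) 0 := by
  refine lintegral_eq_expInt hV.neg hr _ fun t ht ω => ?_
  rw [bsTheta_eq hV ha ht.le, mul_assoc, ← Real.exp_add]
  simp only [zero_mul, sub_zero]

/-- The infimum over `W (u - s)` is the infimum over the whole path, whence `A` is a discounted
exponential functional of the running maximum of `W`, or of the drawdown of `-W`. -/
lemma bsA_eq [IsProbabilityMeasure P] (hV : IsStdBM P V) {α β σ r : ℝ}
    (hb : 0 ≤ σ * α / (1 - α)) (hδ : 0 ≤ CDdelta α β) (hr : 0 < r) :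
    bsA P V α β σ r = ENNReal.ofReal (CDdelta α β)
      * expInt P (fun t ω => -V t ω) r 0 (σ * α / (1 - α)) := by
  rw [expInt_neg_drawdown hV hr hb]
  refine lintegral_eq_expInt hV hδ _ fun u hu ω => ?_
  have himg : (fun s => Real.exp (-(σ * α / (1 - α)) * V (u - s) ω)) '' Set.Icc 0 u
      = (fun s => Real.exp (-(σ * α / (1 - α)) * V s ω)) '' Set.Icc 0 u := by
    have : (fun s => Real.exp (-(σ * α / (1 - α)) * V (u - s) ω))
        = (fun s => Real.exp (-(σ * α / (1 - α)) * V s ω)) ∘ fun s => u - s := rfl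
    rw [this, image_comp, image_const_sub_Icc]
    simp
  rw [himg, sInf_exp_image (hV.cont ω) hu.le hb, mul_assoc, ← Real.exp_add]
  simp only [zero_mul, sub_zero]

lemma bsI1_eq [SFinite P] (hV : IsStdBM P V) {α β σ r : ℝ} (hα : 0 < α) (hβ : 0 < β)
    (hαβ : α + β < 1) (hσ : 0 < σ) :
    bsI1 P V α β σ r = ENNReal.ofReal (((bsA P V α β σ r).toReal)⁻¹
        * ((α + β) / α) ^ (-(1 / (1 - α))))
      * expInt P (fun t ω => -V t ω) r (σ * α / (1 - α - β)) (σ * α / (1 - α)) := by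
  have h1 : 0 < 1 - α - β := by linarith
  have h2 : 0 < 1 - α := by linarith
  have hK : 0 < (α + β) / α := by positivity
  refine lintegral_eq_expInt hV.neg (by positivity) _ fun t ht ω => ?_
  have hinf : sInf ((fun s => Real.exp (σ * α * β / (1 - α - β) * V s ω)) '' Set.Icc 0 t)
      = Real.exp (-(σ * α * β / (1 - α - β)) * runMax (fun s => -V s ω) t) := by
    have := sInf_exp_image (c := σ * α * β / (1 - α - β)) (hV.neg.cont ω) ht.le (by positivity)
    simpa only [mul_neg, neg_mul, neg_neg] using this
  rw [bsGamma, hinf, Real.mul_rpow (by positivity) (Real.exp_nonneg _),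
    Real.mul_rpow hK.le (Real.exp_nonneg _), ← Real.exp_mul, ← Real.exp_mul]
  generalize runMax (fun s => -V s ω) t = m
  generalize ((bsA P V α β σ r).toReal)⁻¹ = A'
  generalize ((α + β) / α) ^ (-(1 / (1 - α))) = K
  have e : ∀ x1 x2 x3 x4 : ℝ, Real.exp x1 * Real.exp x2 * (A' * (K * Real.exp x3 * Real.exp x4))
      = A' * K * Real.exp (x1 + x2 + x3 + x4) := fun x1 x2 x3 x4 => by
    simp only [Real.exp_add]; ring
  rw [e]
  congr 2
  field_simp
  ring

/-- The private-good term is the fixed multiple `α / β` of the public-good term. -/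
lemma bsI1_eq_mul_bsI2 [IsProbabilityMeasure P] (hV : IsStdBM P V) {α β σ r : ℝ} (hα : 0 < α)
    (hβ : 0 < β) (hαβ : α + β < 1) (hσ : 0 < σ) (hr : 0 < r)
    (hrate : σ * α / (1 - α - β) < Real.sqrt (2 * r)) :
    (bsI1 P V α β σ r).toReal = α / β * (bsI2 P V α β σ r).toReal
      ∧ 0 < (bsI2 P V α β σ r).toReal := by
  have h1 : 0 < 1 - α - β := by linarith
  have h2 : 0 < 1 - α := by linarith
  have ha : 0 < σ * α / (1 - α - β) := by positivity
  have hb : 0 < σ * α / (1 - α) := by positivity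
  have hK : 0 < ((α + β) / α) ^ (-(1 / (1 - α))) := Real.rpow_pos_of_pos (by positivity) _
  have hδ : CDdelta α β = β / α * ((α + β) / α) ^ (-(1 / (1 - α))) := by
    rw [CDdelta, ← neg_sub 1 α, one_div, one_div, inv_neg]
  have hδ0 : 0 < CDdelta α β := by rw [hδ]; positivity
  have hra : (σ * α / (1 - α - β)) ^ 2 < 2 * r := (Real.lt_sqrt ha.le).1 hrate
  have hX := hV.neg
  have hI1 := bsI1_eq (r := r) hV hα hβ hαβ hσ
  have hI2 := bsI2_eq hV ha.le hr.le
  have hA := bsA_eq hV hb.le hδ0.le hr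
  generalize σ * α / (1 - α - β) = a at *
  generalize σ * α / (1 - α) = b at *
  have hWH := congrArg ENNReal.toReal (expInt_wienerHopf hX hr ha.le hb.le hra)
  have hY : 0 < (expInt P (fun t ω => -V t ω) r a 0).toReal :=
    ENNReal.toReal_pos (expInt_ne_zero hX r a 0) (expInt_ne_top hX hra)
  have hB : 0 < (expInt P (fun t ω => -V t ω) r 0 b).toReal := by
    refine ENNReal.toReal_pos (expInt_ne_zero hX r 0 b)
      (ne_top_of_le_ne_top ?_ (expInt_le hX r 0 hb.le))
    rw [expInt_zero hX hr]
    exact ENNReal.ofReal_ne_top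
  rw [expInt_zero hX hr, ENNReal.toReal_mul, ENNReal.toReal_mul,
    ENNReal.toReal_ofReal (by positivity)] at hWH
  rw [hI1, hI2, hA]
  simp only [ENNReal.toReal_mul, ENNReal.toReal_ofReal hδ0.le, ENNReal.toReal_ofReal hr.le]
  refine ⟨?_, mul_pos hr hY⟩
  generalize (expInt P (fun t ω => -V t ω) r a 0).toReal = Y at *
  generalize (expInt P (fun t ω => -V t ω) r 0 b).toReal = B at *
  generalize (expInt P (fun t ω => -V t ω) r a b).toReal = Z at *
  generalize ((α + β) / α) ^ (-(1 / (1 - α))) = K at *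
  have hZ : Z = r * (Y * B) := by rw [← hWH]; field_simp
  rw [ENNReal.toReal_ofReal (by positivity), hZ, hδ]
  field_simp

end Final

/-- **The degree of free-riding in the Black–Scholes specialization.**
`κ/l₀ = (α+β)/(nα+β)`; consequently the Nash-equilibrium aggregate contribution
`Ĉ(t) = κ·θ(t)` and the planner's aggregate contribution `C_*(t) = l₀·θ(t)` satisfy
`Ĉ(t)/C_*(t) = (α+β)/(nα+β) ≤ 1` for all `t ≥ 0` — a ratio that does not depend on the
volatility `σ`. -/
theorem stmt_7 {Ω : Type*} [MeasurableSpace Ω] (P : Measure Ω) [IsProbabilityMeasure P]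
    (W : ℝ → Ω → ℝ)
    (hWmeas : ∀ t, Measurable (W t))
    (hW0 : ∀ ω, W 0 ω = 0)
    (hWcont : ∀ ω, Continuous fun t => W t ω)
    (hWindep : ∀ s t : ℝ, 0 ≤ s → s ≤ t → ∀ (m : ℕ) (v : Fin m → ℝ),
      (∀ i, 0 ≤ v i ∧ v i ≤ s) →
      IndepFun (fun ω => W t ω - W s ω) (fun ω i => W (v i) ω) P)
    (hWgauss : ∀ s t : ℝ, 0 ≤ s → s ≤ t →
      Measure.map (fun ω => W t ω - W s ω) P = gaussianReal 0 (Real.toNNReal (t - s)))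
    (n : ℕ) (hn : 1 ≤ n) (w : ℝ) (hw : 0 < w)
    (α β : ℝ) (hα : α ∈ Set.Ioo (0 : ℝ) 1) (hβ : β ∈ Set.Ioo (0 : ℝ) 1) (hαβ : α + β < 1)
    (σ r : ℝ) (hσ : 0 < σ) (hr : 0 < r)
    (hrate : σ * α / (1 - α - β) < Real.sqrt (2 * r)) :
    bsKappa P W α β σ r n w / bsl0 P W α β σ r n w = (α + β) / (n * α + β) ∧
    (α + β) / (n * α + β) ≤ 1 ∧
    ∀ t : ℝ, 0 ≤ t → ∀ ω : Ω,
      (bsKappa P W α β σ r n w * bsTheta W α β σ t ω)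
          / (bsl0 P W α β σ r n w * bsTheta W α β σ t ω)
        = (α + β) / (n * α + β) := by
  obtain ⟨hα0, -⟩ := hα
  obtain ⟨hβ0, -⟩ := hβ
  have hV : IsStdBM P W := ⟨hWmeas, hW0, hWcont, hWindep, hWgauss⟩
  obtain ⟨hI1, hI2⟩ := bsI1_eq_mul_bsI2 hV hα0 hβ0 hαβ hσ hr hrate
  have hn1 : (1 : ℝ) ≤ n := by exact_mod_cast hn
  have hn0 : (0 : ℝ) < n := by linarith
  have hden : 0 < n * α + β := by positivity
  have hratio : bsKappa P W α β σ r n w / bsl0 P W α β σ r n w = (α + β) / (n * α + β) := by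
    rw [bsKappa, bsl0, hI1]
    generalize (bsI2 P W α β σ r).toReal = I at *
    have e1 : α / β * I + I = (α + β) / β * I := by field_simp
    have e2 : α / β * I + 1 / n * I = (n * α + β) / (n * β) * I := by field_simp
    rw [e1, e2]
    field_simp
  refine ⟨hratio, ?_, fun t ht ω => ?_⟩
  · rw [div_le_one hden]
    nlinarith
  · have hθ : bsTheta W α β σ t ω ≠ 0 := by
      have h1 : 0 < 1 - α - β := by linarith
      rw [bsTheta_eq hV (by positivity) ht ω]
      exact (Real.exp_pos _).ne'
    rw [mul_div_mul_right _ _ hθ, hratio]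

end
end

section
/- For every r > 0, every a ≥ 0 and every b with 0 ≤ b < √(2r), E[∫_0^∞ r·e^{−rt}·e^{a·(W(t) − M(t)) + b·M(t)} dt] = ( √(2r)/(√(2r) + a) )·( √(2r)/(√(2r) − b) ). (This is the Wiener–Hopf factorization at an independent exponential time: M(τ_r) and M(τ_r) − W(τ_r) are independent, exponentially distributed with parameter √(2r).) -/
/-!
Write `l = √(2r)`, `c = b - a`, and let `τ` be exponential with rate `r`, independent of `W`; the
left-hand side is `E[exp (a W(τ) + c M(τ))]`. Since `M ≥ max W 0`, integrating the derivative of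
`m ↦ exp (c m)` from `max W 0` to `M` gives, pathwise,

  `exp (a W + c M) = exp (a W + c max W 0) + c ∫_{m > 0} 1{W ≤ m < M} exp (c m + a W) dm`.

The reflection principle `E[g(W(t)); W(t) ≤ m < M(t)] = E[g(2m - W(t)); W(t) > m]` turns the
expectation of the right-hand side into integrals against the law of `W(τ)` alone. That law is the
two-sided exponential law with density `l/2 * exp (-l|x|)`, because the two characteristic functions
are both `θ ↦ r / (r + θ²/2)`; the remaining integrals are elementary.

The reflection principle is obtained from its discrete analogue on the grid `k t / (N + 1)`: on the
event that the grid path first reaches level `m` at time `s_k`, the increment `W(t) - W(s_k)` is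
symmetric and independent of the path on the grid up to `s_k`, so `W(t)` may be replaced by
`2 W(s_k) - W(t)`. As `N → ∞` the first grid value above `m` tends to `m` by uniform continuity, and
the event that the grid path reaches `m` tends to `{M(t) > m}` as soon as `M(t) ≠ m` almost surely,
which holds for all but countably many `m`.

All integrands are nonnegative, so lower Lebesgue integrals are used throughout. As `c` may have
either sign, the pathwise identity is written additively, with `c⁻` on the left and `c⁺` on the
right.
-/

open MeasureTheory ProbabilityTheory Set Filter
open scoped ENNReal Topology

/-! ### The exponential and two-sided exponential laws -/

/-- The exponential law of rate `r`: density `r * exp (-r t)` on `(0, ∞)`. -/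
noncomputable def expLaw (r : ℝ) : Measure ℝ :=
  (volume.restrict (Ioi 0)).withDensity fun t => ENNReal.ofReal (r * Real.exp (-r * t))

/-- The two-sided exponential (Laplace) law: density `l / 2 * exp (-l |x|)` on `ℝ`. -/
noncomputable def laplaceLaw (l : ℝ) : Measure ℝ :=
  volume.withDensity fun x => ENNReal.ofReal (l / 2 * Real.exp (-l * |x|))

lemma lintegral_expLaw (r : ℝ) {f : ℝ → ℝ≥0∞} (hf : Measurable f) :
    ∫⁻ t, f t ∂(expLaw r) = ∫⁻ t in Ioi 0, ENNReal.ofReal (r * Real.exp (-r * t)) * f t := by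
  rw [expLaw, lintegral_withDensity_eq_lintegral_mul _ (by fun_prop) hf]
  rfl

lemma lintegral_laplaceLaw (l : ℝ) {f : ℝ → ℝ≥0∞} (hf : Measurable f) :
    ∫⁻ x, f x ∂(laplaceLaw l) = ∫⁻ x, ENNReal.ofReal (l / 2 * Real.exp (-l * |x|)) * f x := by
  rw [laplaceLaw, lintegral_withDensity_eq_lintegral_mul _ (by fun_prop) hf]
  rfl

lemma lintegral_exp_Ioi {k : ℝ} (hk : 0 < k) (c : ℝ) :
    ∫⁻ x in Ioi c, ENNReal.ofReal (Real.exp (-k * x)) = ENNReal.ofReal (Real.exp (-k * c) / k) := by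
  rw [← ofReal_integral_eq_lintegral_ofReal (integrableOn_exp_mul_Ioi (by linarith) c)
    (ae_of_all _ fun x => (Real.exp_pos _).le), integral_exp_mul_Ioi (by linarith)]
  congr 1
  field_simp

lemma lintegral_exp_Iic {k : ℝ} (hk : 0 < k) (c : ℝ) :
    ∫⁻ x in Iic c, ENNReal.ofReal (Real.exp (k * x)) = ENNReal.ofReal (Real.exp (k * c) / k) := by
  rw [← ofReal_integral_eq_lintegral_ofReal (integrableOn_exp_mul_Iic hk c)
    (ae_of_all _ fun x => (Real.exp_pos _).le), integral_exp_mul_Iic hk]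

lemma isProbabilityMeasure_expLaw {r : ℝ} (hr : 0 < r) : IsProbabilityMeasure (expLaw r) := by
  refine ⟨?_⟩
  have h := lintegral_expLaw r (f := fun _ => 1) measurable_const
  rw [lintegral_one] at h
  rw [h]
  simp only [mul_one, ENNReal.ofReal_mul hr.le]
  rw [lintegral_const_mul _ (by fun_prop), lintegral_exp_Ioi hr, ← ENNReal.ofReal_mul hr.le]
  simp [hr.ne']

lemma laplace_integrand_Ioi (l θ : ℝ) : EqOn
    (fun x : ℝ => ((l / 2 * Real.exp (-l * |x|) : ℝ) : ℂ) * Complex.exp (θ * x * Complex.I))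
    (fun x : ℝ => (l / 2 : ℂ) * Complex.exp ((-l + θ * Complex.I) * x)) (Ioi 0) := by
  intro x hx
  simp only [abs_of_pos (show (0:ℝ) < x from hx)]
  push_cast
  rw [mul_assoc, ← Complex.exp_add]
  ring_nf

lemma laplace_integrand_Iic (l θ : ℝ) : EqOn
    (fun x : ℝ => ((l / 2 * Real.exp (-l * |x|) : ℝ) : ℂ) * Complex.exp (θ * x * Complex.I))
    (fun x : ℝ => (l / 2 : ℂ) * Complex.exp ((l + θ * Complex.I) * x)) (Iic 0) := by
  intro x hx
  simp only [abs_of_nonpos (show x ≤ 0 from hx)]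
  push_cast
  rw [mul_assoc, ← Complex.exp_add]
  ring_nf

lemma charFun_laplaceLaw {l : ℝ} (hl : 0 < l) (θ : ℝ) :
    charFun (laplaceLaw l) θ = (l : ℂ) ^ 2 / ((l : ℂ) ^ 2 + (θ : ℂ) ^ 2) := by
  have hre1 : (-(l : ℂ) + θ * Complex.I).re < 0 := by simp [hl]
  have hre2 : 0 < ((l : ℂ) + θ * Complex.I).re := by simp [hl]
  have h1 : IntegrableOn (fun x : ℝ => ((l / 2 * Real.exp (-l * |x|) : ℝ) : ℂ) *
      Complex.exp (θ * x * Complex.I)) (Ioi 0) :=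
    IntegrableOn.congr_fun ((integrableOn_exp_mul_complex_Ioi hre1 0).const_mul (l / 2 : ℂ))
      (laplace_integrand_Ioi l θ).symm measurableSet_Ioi
  have h2 : IntegrableOn (fun x : ℝ => ((l / 2 * Real.exp (-l * |x|) : ℝ) : ℂ) *
      Complex.exp (θ * x * Complex.I)) (Iic 0) :=
    IntegrableOn.congr_fun ((integrableOn_exp_mul_complex_Iic hre2 0).const_mul (l / 2 : ℂ))
      (laplace_integrand_Iic l θ).symm measurableSet_Iic
  rw [charFun_apply_real, laplaceLaw, integral_withDensity_eq_integral_toReal_smul (by fun_prop)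
    (ae_of_all _ fun _ => ENNReal.ofReal_lt_top)]
  have h3 : ∀ x : ℝ, (ENNReal.ofReal (l / 2 * Real.exp (-l * |x|))).toReal •
      Complex.exp (θ * x * Complex.I) = ((l / 2 * Real.exp (-l * |x|) : ℝ) : ℂ) *
      Complex.exp (θ * x * Complex.I) := by
    intro x
    rw [ENNReal.toReal_ofReal (by positivity), Complex.real_smul]
  simp only [h3]
  rw [← intervalIntegral.integral_Iic_add_Ioi h2 h1,
    setIntegral_congr_fun measurableSet_Iic (laplace_integrand_Iic l θ),
    setIntegral_congr_fun measurableSet_Ioi (laplace_integrand_Ioi l θ),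
    integral_const_mul, integral_const_mul, integral_exp_mul_complex_Ioi hre1,
    integral_exp_mul_complex_Iic hre2]
  have e1 : -(l : ℂ) + θ * Complex.I ≠ 0 := fun h => by rw [h] at hre1; simp at hre1
  have e2 : (l : ℂ) + θ * Complex.I ≠ 0 := fun h => by rw [h] at hre2; simp at hre2
  have e3 : (l : ℂ) ^ 2 + (θ : ℂ) ^ 2 ≠ 0 := by
    have : l ^ 2 + θ ^ 2 ≠ 0 := by positivity
    exact_mod_cast this
  simp only [Complex.ofReal_zero, mul_zero, Complex.exp_zero]
  rw [eq_div_iff e3]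
  field_simp
  ring_nf
  simp only [Complex.I_sq]
  ring

/-- The characteristic function at `θ` of a centred Gaussian variable of variance `t`, averaged over
an exponential `t`. -/
lemma integral_gaussian_expLaw {r : ℝ} (hr : 0 < r) (θ : ℝ) :
    ∫ t, Complex.exp (-(t * θ ^ 2 / 2 : ℝ)) ∂(expLaw r) = (r : ℂ) / (r + θ ^ 2 / 2) := by
  rw [expLaw, integral_withDensity_eq_integral_toReal_smul (by fun_prop)
    (ae_of_all _ fun _ => ENNReal.ofReal_lt_top)]
  have h3 : ∀ t : ℝ, (ENNReal.ofReal (r * Real.exp (-r * t))).toReal •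
      Complex.exp (-(t * θ ^ 2 / 2 : ℝ)) = (r : ℂ) * Complex.exp (-(r + θ ^ 2 / 2) * t) := by
    intro t
    rw [ENNReal.toReal_ofReal (by positivity), Complex.real_smul]
    push_cast
    rw [mul_assoc, ← Complex.exp_add]
    ring_nf
  have hre : (-((r : ℂ) + θ ^ 2 / 2)).re < 0 := by
    have : (-((r : ℂ) + θ ^ 2 / 2)) = ((-(r + θ ^ 2 / 2) : ℝ) : ℂ) := by push_cast; ring
    rw [this, Complex.ofReal_re]
    have : 0 < r + θ ^ 2 / 2 := by positivity
    linarith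
  have hne : ((r : ℂ) + θ ^ 2 / 2) ≠ 0 := fun h => by rw [h] at hre; simp at hre
  simp only [h3]
  rw [integral_const_mul, integral_exp_mul_complex_Ioi hre]
  simp only [Complex.ofReal_zero, mul_zero, Complex.exp_zero]
  field_simp

/-- An infinite total mass would give the junk value `0` to the characteristic function at `0`,
where it is `1`. -/
lemma isFiniteMeasure_laplaceLaw {l : ℝ} (hl : 0 < l) : IsFiniteMeasure (laplaceLaw l) := by
  constructor
  by_contra h
  have h1 : (laplaceLaw l).real univ = 0 := by
    rw [Measure.real, not_lt_top_iff.1 h, ENNReal.toReal_top]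
  have h0 := charFun_laplaceLaw hl 0
  rw [charFun_zero, h1] at h0
  simp [hl.ne'] at h0

/-! ### Brownian motion at an exponential time -/

lemma measurable_uncurry_path {Ω : Type*} [MeasurableSpace Ω] {W : ℝ → Ω → ℝ}
    (hWmeas : ∀ t, Measurable (W t)) (hWcont : ∀ ω, Continuous fun t => W t ω) :
    Measurable fun p : ℝ × Ω => W p.1 p.2 :=
  measurable_uncurry_of_continuous_of_measurable (u := W) hWcont hWmeas

/-- At an independent exponential time of rate `r`, a process with continuous paths and the
one-dimensional laws of Brownian motion has the two-sided exponential law of parameter `√(2r)`. -/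
lemma map_eq_laplaceLaw {Ω : Type*} [MeasurableSpace Ω] (P : Measure Ω) [IsProbabilityMeasure P]
    {W : ℝ → Ω → ℝ} (hWmeas : ∀ t, Measurable (W t)) (hWcont : ∀ ω, Continuous fun t => W t ω)
    (hlaw : ∀ t, 0 ≤ t → P.map (W t) = gaussianReal 0 t.toNNReal) {r : ℝ} (hr : 0 < r) :
    ((expLaw r).prod P).map (fun p : ℝ × Ω => W p.1 p.2) = laplaceLaw (Real.sqrt (2 * r)) := by
  have := isProbabilityMeasure_expLaw hr
  have hm := measurable_uncurry_path hWmeas hWcont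
  have hl : 0 < Real.sqrt (2 * r) := by positivity
  have := isFiniteMeasure_laplaceLaw hl
  refine Measure.ext_of_charFun (funext fun θ => ?_)
  rw [charFun_laplaceLaw hl, charFun_apply_real, integral_map hm.aemeasurable (by fun_prop),
    integral_prod]
  · have h1 : ∀ᵐ t ∂(expLaw r), ∫ ω, Complex.exp (θ * (W t ω) * Complex.I) ∂P
        = Complex.exp (-(t * θ ^ 2 / 2 : ℝ)) := by
      have : ∀ᵐ t ∂(expLaw r), t ∈ Ioi (0:ℝ) :=
        (withDensity_absolutelyContinuous _ _).ae_le (ae_restrict_mem measurableSet_Ioi)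
      filter_upwards [this] with t ht
      have h2 := charFun_gaussianReal (μ := 0) (v := t.toNNReal) θ
      rw [← hlaw t (le_of_lt ht), charFun_apply_real,
        integral_map (hWmeas t).aemeasurable (by fun_prop)] at h2
      rw [h2]
      simp [Real.coe_toNNReal _ (le_of_lt ht)]
    rw [integral_congr_ae h1, integral_gaussian_expLaw hr]
    have h3 : ((Real.sqrt (2 * r) : ℝ) : ℂ) ^ 2 = 2 * r := by
      rw [← Complex.ofReal_pow, Real.sq_sqrt (by positivity)]; push_cast; ring
    rw [h3]
    have e1 : (r : ℂ) + θ ^ 2 / 2 ≠ 0 := by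
      have : r + θ ^ 2 / 2 ≠ 0 := by positivity
      exact_mod_cast this
    have e2 : 2 * (r : ℂ) + θ ^ 2 ≠ 0 := by
      have : 2 * r + θ ^ 2 ≠ 0 := by positivity
      exact_mod_cast this
    field_simp
  · refine Integrable.of_bound (C := 1) ?_ (ae_of_all _ fun p => ?_)
    · exact (by fun_prop : Measurable fun p : ℝ × Ω =>
        Complex.exp (θ * (W p.1 p.2) * Complex.I)).aestronglyMeasurable
    · rw [← Complex.ofReal_mul, Complex.norm_exp_ofReal_mul_I]

/-- The running maximum agrees at positive times with a jointly measurable function, namely the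
supremum of `W (q t)` over rational `q ∈ [0, 1]`. -/
lemma exists_measurable_runningMax {Ω : Type*} [MeasurableSpace Ω] {W : ℝ → Ω → ℝ}
    (hm : Measurable fun p : ℝ × Ω => W p.1 p.2) (hWcont : ∀ ω, Continuous fun t => W t ω) :
    ∃ M : ℝ → Ω → ℝ, (Measurable fun p : ℝ × Ω => M p.1 p.2) ∧
      ∀ t, 0 < t → ∀ ω, sSup ((fun s => W s ω) '' Icc 0 t) = M t ω := by
  refine ⟨fun t ω => ⨆ q : {q : ℚ // (q : ℝ) ∈ Icc (0 : ℝ) 1}, W ((q : ℝ) * t) ω, ?_, ?_⟩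
  · refine Measurable.iSup fun q => ?_
    exact hm.comp (by fun_prop : Measurable fun p : ℝ × Ω => ((q : ℝ) * p.1, p.2))
  intro t ht ω
  have hbdd : BddAbove ((fun s => W s ω) '' Icc 0 t) :=
    (isCompact_Icc.image (hWcont ω)).bddAbove
  have hmem : ∀ x ∈ Icc (0 : ℝ) 1, W (x * t) ω ∈ (fun s => W s ω) '' Icc 0 t := fun x hx =>
    ⟨x * t, ⟨mul_nonneg hx.1 ht.le, mul_le_of_le_one_left ht.le hx.2⟩, rfl⟩
  have hbdd' : BddAbove (range fun q : {q : ℚ // (q : ℝ) ∈ Icc (0 : ℝ) 1} =>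
      W ((q : ℝ) * t) ω) := by
    refine hbdd.mono ?_
    rintro _ ⟨q, rfl⟩
    exact hmem _ q.2
  have : Nonempty {q : ℚ // (q : ℝ) ∈ Icc (0 : ℝ) 1} := ⟨⟨0, by simp⟩⟩
  apply le_antisymm
  · refine csSup_le ⟨_, hmem 0 (by simp)⟩ ?_
    have hcl : IsClosed {x : ℝ | W (x * t) ω ≤
        ⨆ q : {q : ℚ // (q : ℝ) ∈ Icc (0 : ℝ) 1}, W ((q : ℝ) * t) ω} :=
      isClosed_le ((hWcont ω).comp (by fun_prop)) continuous_const
    have hd : Ioo (0 : ℝ) 1 ⊆ closure (Ioo 0 1 ∩ range ((↑) : ℚ → ℝ)) :=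
      Dense.open_subset_closure_inter Rat.denseRange_cast isOpen_Ioo
    have hsub : Ioo (0 : ℝ) 1 ∩ range ((↑) : ℚ → ℝ) ⊆ {x : ℝ | W (x * t) ω ≤
        ⨆ q : {q : ℚ // (q : ℝ) ∈ Icc (0 : ℝ) 1}, W ((q : ℝ) * t) ω} := by
      rintro _ ⟨hx, q, rfl⟩
      exact le_ciSup hbdd' ⟨q, Ioo_subset_Icc_self hx⟩
    have hIcc := closure_minimal (hd.trans (closure_minimal hsub hcl)) hcl
    rw [closure_Ioo (by norm_num)] at hIcc
    rintro _ ⟨s, hs, rfl⟩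
    have := hIcc (show s / t ∈ Icc (0 : ℝ) 1 from
      ⟨div_nonneg hs.1 ht.le, (div_le_one ht).2 hs.2⟩)
    simpa [div_mul_cancel₀ _ ht.ne'] using this
  · exact ciSup_le fun q => le_csSup hbdd (hmem _ q.2)

/-! ### First passage on a grid -/

/-- Among the grid times `j t / (N + 1)`, the `k`-th is the first one at which `w` is at level `m`
or above. -/
def FirstHit (w : ℝ → ℝ) (t m : ℝ) (N k : ℕ) : Prop :=
  m ≤ w (k * t / (N + 1)) ∧ ∀ j < k, w (j * t / (N + 1)) < m

open Classical in
/-- At most one grid index is the first hitting index, so a sum over such indices either is empty or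
has exactly one term. -/
lemma sum_firstHit (w : ℝ → ℝ) (t m : ℝ) (N : ℕ) :
    ((∀ k < N + 2, ¬ FirstHit w t m N k) ∧
      ∀ F : ℕ → ℝ, ∑ k ∈ Finset.range (N + 2), (if FirstHit w t m N k then F k else 0) = 0) ∨
    ∃ κ < N + 2, FirstHit w t m N κ ∧
      ∀ F : ℕ → ℝ, ∑ k ∈ Finset.range (N + 2), (if FirstHit w t m N k then F k else 0) = F κ := by
  by_cases h : ∃ κ < N + 2, FirstHit w t m N κ
  · obtain ⟨κ, hκ, hF⟩ := h
    refine Or.inr ⟨κ, hκ, hF, fun F => ?_⟩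
    rw [Finset.sum_eq_single κ, if_pos hF]
    · intro k _ hne
      rw [if_neg]
      intro hk
      rcases lt_or_gt_of_ne hne with h1 | h1
      · exact absurd (hF.2 k h1) (not_lt.2 hk.1)
      · exact absurd (hk.2 κ h1) (not_lt.2 hF.1)
    · intro hn
      exact absurd (Finset.mem_range.2 hκ) hn
  · push Not at h
    refine Or.inl ⟨h, fun F => Finset.sum_eq_zero fun k hk => ?_⟩
    rw [if_neg (h k (Finset.mem_range.1 hk))]

lemma grid_mem {t : ℝ} (ht : 0 < t) {N k : ℕ} (hk : k < N + 2) :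
    (k : ℝ) * t / (N + 1) ∈ Icc 0 t := by
  have h1 : (k : ℝ) ≤ N + 1 := by exact_mod_cast Nat.lt_succ_iff.1 hk
  refine ⟨by positivity, ?_⟩
  rw [div_le_iff₀ (by positivity), mul_comm]
  exact mul_le_mul_of_nonneg_left h1 ht.le

/-- If the maximum exceeds `m`, a fine enough grid sees the path at level `m` or above. -/
lemma eventually_exists_grid {w : ℝ → ℝ} (hw : Continuous w) {t m : ℝ} (ht : 0 < t)
    (h : m < sSup (w '' Icc 0 t)) :
    ∀ᶠ N : ℕ in atTop, ∃ k < N + 2, m ≤ w (k * t / (N + 1)) := by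
  obtain ⟨_, ⟨s, hs, rfl⟩, hms⟩ := exists_lt_of_lt_csSup
    (⟨_, ⟨0, ⟨le_rfl, ht.le⟩, rfl⟩⟩ : (w '' Icc 0 t).Nonempty) h
  have h1 : Tendsto (fun N : ℕ => (⌊s / t * ((N : ℝ) + 1)⌋₊ : ℝ) / ((N : ℝ) + 1) * t) atTop
      (𝓝 (s / t * t)) :=
    ((tendsto_nat_floor_mul_div_atTop (div_nonneg hs.1 ht.le)).comp
      (tendsto_natCast_atTop_atTop.atTop_add tendsto_const_nhds)).mul_const t
  rw [div_mul_cancel₀ _ ht.ne'] at h1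
  filter_upwards [((hw.tendsto s).comp h1).eventually (lt_mem_nhds hms)] with N hN
  refine ⟨⌊s / t * ((N : ℝ) + 1)⌋₊, ?_, ?_⟩
  · have h2 : s / t * ((N : ℝ) + 1) ≤ ((N + 1 : ℕ) : ℝ) := by
      push_cast
      exact mul_le_of_le_one_left (by positivity) ((div_le_one ht).2 hs.2)
    exact Nat.lt_succ_of_le (Nat.floor_le_of_le h2)
  · simp only [Function.comp] at hN
    rw [div_mul_eq_mul_div] at hN
    exact hN.le

open Classical in
/-- The value of `w` at its first grid passage above `m` tends to `m` when `m < max w`, and there is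
no such passage when `max w < m`. -/
lemma tendsto_sum_firstHit {w : ℝ → ℝ} (hw : Continuous w) (h0 : w 0 = 0) {t m : ℝ}
    (ht : 0 < t) (hm : 0 < m) (hne : sSup (w '' Icc 0 t) ≠ m) {φ : ℝ → ℝ} (hφ : Continuous φ) :
    Tendsto (fun N : ℕ => ∑ k ∈ Finset.range (N + 2),
        (if FirstHit w t m N k then φ (w (k * t / (N + 1))) else 0)) atTop
      (𝓝 (if m < sSup (w '' Icc 0 t) then φ m else 0)) := by
  have hbdd : BddAbove (w '' Icc 0 t) := (isCompact_Icc.image hw).bddAbove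
  split_ifs with hM
  · rw [Metric.tendsto_atTop']
    intro ε hε
    obtain ⟨δ, hδ, hδφ⟩ := Metric.continuousAt_iff.1 hφ.continuousAt ε hε
    obtain ⟨η, hη, hηw⟩ := Metric.uniformContinuousOn_iff.1
      (isCompact_Icc.uniformContinuousOn_of_continuous (hw.continuousOn (s := Icc 0 t))) δ hδ
    have hsmall : ∀ᶠ N : ℕ in atTop, t / ((N : ℝ) + 1) < η :=
      (tendsto_const_nhds.div_atTop (tendsto_natCast_atTop_atTop.atTop_add
        tendsto_const_nhds)).eventually (gt_mem_nhds hη)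
    obtain ⟨N₀, hN₀⟩ := eventually_atTop.1 (hsmall.and (eventually_exists_grid hw ht hM))
    refine ⟨N₀, fun N hN => ?_⟩
    obtain ⟨hs, hex⟩ := hN₀ N hN.le
    rcases sum_firstHit w t m N with ⟨hno, -⟩ | ⟨κ, hκ, hF, hsum⟩
    · exfalso
      have hex' : ∃ k : ℕ, m ≤ w (k * t / (N + 1)) := hex.imp fun k hk => hk.2
      obtain ⟨k, hk, hmk⟩ := hex
      refine hno (Nat.find hex') (lt_of_le_of_lt (Nat.find_min' hex' hmk) hk)
        ⟨Nat.find_spec hex', fun j hj => not_le.1 (Nat.find_min hex' hj)⟩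
    · rw [hsum fun k => φ (w (k * t / (N + 1)))]
      apply hδφ
      -- The first passage is not at time `0`, and one step earlier the path is below `m`, so the
      -- overshoot is at most one increment of `w` over a mesh.
      obtain ⟨i, rfl⟩ : ∃ i, κ = i + 1 := by
        refine Nat.exists_eq_succ_of_ne_zero fun h => ?_
        have := hF.1
        rw [h] at this
        simp [h0] at this
        linarith
      have h1 := hF.2 i (Nat.lt_succ_self i)
      have h2 := hηw _ (grid_mem ht hκ) _ (grid_mem ht (show i < N + 2 by omega)) (by
        rw [Real.dist_eq]
        have : ((i + 1 : ℕ) : ℝ) * t / (N + 1) - (i : ℝ) * t / (N + 1) = t / (N + 1) := by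
          push_cast; ring
        rw [this, abs_of_pos (by positivity)]
        exact hs)
      rw [Real.dist_eq] at h2 ⊢
      rw [abs_of_nonneg (by linarith [hF.1])]
      linarith [le_abs_self (w (((i + 1 : ℕ) : ℝ) * t / (N + 1)) - w ((i : ℝ) * t / (N + 1)))]
  · refine tendsto_const_nhds.congr fun N => (Finset.sum_eq_zero fun k hk => ?_).symm
    rw [if_neg]
    intro hF
    have h1 := le_csSup hbdd (mem_image_of_mem w (grid_mem ht (Finset.mem_range.1 hk)))
    exact hne (le_antisymm (not_lt.1 hM) (hF.1.trans h1))

/-! ### The reflection principle -/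

lemma measurableSet_firstHit {Ω : Type*} [MeasurableSpace Ω] {W : ℝ → Ω → ℝ}
    (hWmeas : ∀ t, Measurable (W t)) (t m : ℝ) (N k : ℕ) :
    MeasurableSet {ω | FirstHit (fun s => W s ω) t m N k} := by
  simp only [FirstHit, ofPred_and, ofPred_forall]
  refine (measurableSet_le measurable_const (hWmeas _)).inter ?_
  exact MeasurableSet.iInter fun j => MeasurableSet.iInter fun _ =>
    measurableSet_lt (hWmeas _) measurable_const

open Classical in
/-- Discrete reflection: the path after the first grid passage `s` may be reflected about `W s`,
because the increment `W t - W s` is symmetric and independent of the grid values up to `s`. -/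
lemma reflect_firstHit {Ω : Type*} [MeasurableSpace Ω] {P : Measure Ω} [IsProbabilityMeasure P]
    {W : ℝ → Ω → ℝ} (hWmeas : ∀ t, Measurable (W t))
    (hWindep : ∀ s t : ℝ, 0 ≤ s → s ≤ t → ∀ (m : ℕ) (v : Fin m → ℝ),
      (∀ i, 0 ≤ v i ∧ v i ≤ s) →
      IndepFun (fun ω => W t ω - W s ω) (fun ω i => W (v i) ω) P)
    (hWgauss : ∀ s t : ℝ, 0 ≤ s → s ≤ t →
      Measure.map (fun ω => W t ω - W s ω) P = gaussianReal 0 (Real.toNNReal (t - s)))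
    {t : ℝ} (ht : 0 < t) (m : ℝ) {N k : ℕ} (hk : k < N + 2) {f : ℝ → ℝ} (hf : Measurable f) :
    ∫ ω, (if FirstHit (fun s => W s ω) t m N k then f (W t ω) else 0) ∂P =
      ∫ ω, (if FirstHit (fun s => W s ω) t m N k then
        f (2 * W (k * t / (N + 1)) ω - W t ω) else 0) ∂P := by
  have hs := grid_mem ht hk
  set s : ℝ := k * t / (N + 1) with hsdef
  set Δ : Ω → ℝ := fun ω => W t ω - W s ω with hΔ
  set V : Ω → Fin (k + 1) → ℝ := fun ω i => W (((i : ℕ) : ℝ) * t / (N + 1)) ω with hV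
  have hΔm : Measurable Δ := (hWmeas _).sub (hWmeas _)
  have hΔn : Measurable fun ω => -Δ ω := hΔm.neg
  have hVm : Measurable V := measurable_pi_lambda _ fun i => hWmeas _
  have hind : IndepFun Δ V P := by
    refine hWindep s t hs.1 hs.2 (k + 1) (fun i => ((i : ℕ) : ℝ) * t / (N + 1)) fun i => ?_
    have hi : ((i : ℕ) : ℝ) ≤ k := by exact_mod_cast Nat.lt_succ_iff.1 i.2
    refine ⟨by positivity, ?_⟩
    rw [hsdef]
    gcongr
  have hneg : P.map (fun ω => -Δ ω) = P.map Δ := by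
    have h1 := Measure.map_map (μ := P) (measurable_neg (G := ℝ)) hΔm
    have h2 : P.map Δ = gaussianReal 0 (Real.toNNReal (t - s)) := hWgauss s t hs.1 hs.2
    have h3 := gaussianReal_map_neg (μ := 0) (v := Real.toNNReal (t - s))
    rw [neg_zero, ← h2] at h3
    exact h1.symm.trans h3
  have hjoint : P.map (fun ω => (Δ ω, V ω)) = P.map (fun ω => (-Δ ω, V ω)) := by
    rw [(indepFun_iff_map_prod_eq_prod_map_map hΔm.aemeasurable hVm.aemeasurable).1 hind,
      (indepFun_iff_map_prod_eq_prod_map_map hΔn.aemeasurable hVm.aemeasurable).1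
        (hind.comp measurable_neg measurable_id), ← hneg]
  set A : Set (Fin (k + 1) → ℝ) := {v | m ≤ v (Fin.last k) ∧ ∀ j, j < Fin.last k → v j < m} with hA
  have hAm : MeasurableSet A := by
    simp only [hA, ofPred_and, ofPred_forall]
    refine (measurableSet_le measurable_const (measurable_pi_apply _)).inter ?_
    exact MeasurableSet.iInter fun j => MeasurableSet.iInter fun _ =>
      measurableSet_lt (measurable_pi_apply _) measurable_const
  have hFA : ∀ ω, FirstHit (fun s => W s ω) t m N k ↔ V ω ∈ A := by
    intro ω
    simp only [FirstHit, hA, hV, mem_ofPred_eq, Fin.val_last]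
    refine and_congr_right fun _ => ⟨fun h j hj => h j hj, fun h j hj => ?_⟩
    exact h ⟨j, hj.trans (Nat.lt_succ_self k)⟩ hj
  set G : ℝ × (Fin (k + 1) → ℝ) → ℝ :=
    fun p => if p.2 ∈ A then f (p.2 (Fin.last k) + p.1) else 0 with hG
  have hGm : Measurable G :=
    Measurable.ite (measurable_snd hAm) (hf.comp (by fun_prop)) measurable_const
  have hVs : ∀ ω, V ω (Fin.last k) = W s ω := fun ω => by simp [hV, hsdef]
  calc _ = ∫ ω, G (Δ ω, V ω) ∂P := by
        refine integral_congr_ae (ae_of_all _ fun ω => ?_)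
        simp only [hG, hFA, hVs, hΔ, add_sub_cancel]
    _ = ∫ ω, G (-Δ ω, V ω) ∂P := by
        rw [← integral_map (φ := fun ω => (Δ ω, V ω)) (hΔm.prodMk hVm).aemeasurable
          hGm.aestronglyMeasurable, hjoint,
          integral_map (hΔn.prodMk hVm).aemeasurable hGm.aestronglyMeasurable]
    _ = _ := by
        refine integral_congr_ae (ae_of_all _ fun ω => ?_)
        simp only [hG, hFA, hVs, hΔ]
        congr 2
        ring

/-- Reflection about the level `m` on the event `M(t) > m`, for bounded continuous functions of
`W(t)`, as the limit of the discrete reflections `reflect_firstHit`. -/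
lemma reflect_bounded {Ω : Type*} [MeasurableSpace Ω] {P : Measure Ω} [IsProbabilityMeasure P]
    {W : ℝ → Ω → ℝ} (hWmeas : ∀ t, Measurable (W t))
    (hW0 : ∀ ω, W 0 ω = 0)
    (hWcont : ∀ ω, Continuous fun t => W t ω)
    (hWindep : ∀ s t : ℝ, 0 ≤ s → s ≤ t → ∀ (m : ℕ) (v : Fin m → ℝ),
      (∀ i, 0 ≤ v i ∧ v i ≤ s) →
      IndepFun (fun ω => W t ω - W s ω) (fun ω i => W (v i) ω) P)
    (hWgauss : ∀ s t : ℝ, 0 ≤ s → s ≤ t →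
      Measure.map (fun ω => W t ω - W s ω) P = gaussianReal 0 (Real.toNNReal (t - s)))
    {t : ℝ} (ht : 0 < t) {m : ℝ} (hm : 0 < m) {M : Ω → ℝ}
    (hM : ∀ ω, sSup ((fun s => W s ω) '' Icc 0 t) = M ω) (hMm : ∀ᵐ ω ∂P, M ω ≠ m)
    (f : BoundedContinuousFunction ℝ ℝ) :
    ∫ ω, {ω | m < M ω}.indicator (fun ω => f (W t ω)) ω ∂P =
      ∫ ω, {ω | m < M ω}.indicator (fun ω => f (2 * m - W t ω)) ω ∂P := by
  classical
  -- `φ x ω` is the integrand when the passage level has value `x`. Both sides of the claim are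
  -- limits of this form: `φ` does not depend on `x` on the left, and `φ x ω = f (2 x - W t ω)` on
  -- the right.
  have hlim : ∀ φ : ℝ → Ω → ℝ, (∀ ω, Continuous fun x => φ x ω) →
      (∀ x ω, ‖φ x ω‖ ≤ ‖f‖) → (∀ s, Measurable fun ω => φ (W s ω) ω) →
      Tendsto (fun N : ℕ => ∑ k ∈ Finset.range (N + 2), ∫ ω,
        (if FirstHit (fun s => W s ω) t m N k then φ (W (k * t / (N + 1)) ω) ω else 0) ∂P) atTop
        (𝓝 (∫ ω, {ω | m < M ω}.indicator (fun ω => φ m ω) ω ∂P)) := by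
    intro φ hφ hb hφm
    have hmeas : ∀ N k : ℕ, Measurable fun ω =>
        (if FirstHit (fun s => W s ω) t m N k then φ (W (k * t / (N + 1)) ω) ω else 0) :=
      fun N k => Measurable.ite (measurableSet_firstHit hWmeas t m N k) (hφm _) measurable_const
    have hint : ∀ N k : ℕ, Integrable (fun ω =>
        (if FirstHit (fun s => W s ω) t m N k then φ (W (k * t / (N + 1)) ω) ω else 0)) P := by
      intro N k
      refine Integrable.of_bound (C := ‖f‖) (hmeas N k).aestronglyMeasurable
        (ae_of_all _ fun ω => ?_)
      split_ifs
      · exact hb _ _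
      · simp
    simp_rw [← integral_finsetSum _ fun k _ => hint _ k]
    refine tendsto_integral_of_dominated_convergence (fun _ => ‖f‖)
      (fun N => (Finset.measurable_sum _ fun k _ => hmeas N k).aestronglyMeasurable)
      (integrable_const _) (fun N => ae_of_all _ fun ω => ?_) ?_
    · rcases sum_firstHit (fun s => W s ω) t m N with ⟨-, h⟩ | ⟨κ, -, -, h⟩
      · rw [h fun k => φ (W (k * t / (N + 1)) ω) ω]
        simp
      · rw [h fun k => φ (W (k * t / (N + 1)) ω) ω]
        exact hb _ _
    · filter_upwards [hMm] with ω hω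
      have := tendsto_sum_firstHit (hWcont ω) (hW0 ω) ht hm (by rwa [hM]) (hφ ω)
      rw [hM] at this
      exact this
  refine tendsto_nhds_unique (hlim (fun _ ω => f (W t ω)) (fun _ => continuous_const)
    (fun _ _ => f.norm_coe_le_norm _) (fun _ => f.continuous.measurable.comp (hWmeas t))) ?_
  refine (hlim (fun x ω => f (2 * x - W t ω)) (fun _ => by fun_prop)
    (fun _ _ => f.norm_coe_le_norm _) (fun s => f.continuous.measurable.comp
      (((hWmeas s).const_mul 2).sub (hWmeas t)))).congr fun N => ?_
  exact Finset.sum_congr rfl fun k hk => (reflect_firstHit hWmeas hWindep hWgauss ht m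
    (Finset.mem_range.1 hk) f.continuous.measurable).symm

/-- The reflection principle in the form `E[g(W(t)); W(t) ≤ m < M(t)] = E[g(2m - W(t)); W(t) > m]`.
-/
lemma reflect_lintegral {Ω : Type*} [MeasurableSpace Ω] {P : Measure Ω} [IsProbabilityMeasure P]
    {W : ℝ → Ω → ℝ} (hWmeas : ∀ t, Measurable (W t))
    (hW0 : ∀ ω, W 0 ω = 0)
    (hWcont : ∀ ω, Continuous fun t => W t ω)
    (hWindep : ∀ s t : ℝ, 0 ≤ s → s ≤ t → ∀ (m : ℕ) (v : Fin m → ℝ),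
      (∀ i, 0 ≤ v i ∧ v i ≤ s) →
      IndepFun (fun ω => W t ω - W s ω) (fun ω i => W (v i) ω) P)
    (hWgauss : ∀ s t : ℝ, 0 ≤ s → s ≤ t →
      Measure.map (fun ω => W t ω - W s ω) P = gaussianReal 0 (Real.toNNReal (t - s)))
    {t : ℝ} (ht : 0 < t) {m : ℝ} (hm : 0 < m) {M : Ω → ℝ} (hMmeas : Measurable M)
    (hM : ∀ ω, sSup ((fun s => W s ω) '' Icc 0 t) = M ω) (hMm : ∀ᵐ ω ∂P, M ω ≠ m)
    {g : ℝ → ℝ≥0∞} (hg : Measurable g) :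
    ∫⁻ ω, (if W t ω ≤ m ∧ m < M ω then g (W t ω) else 0) ∂P =
      ∫⁻ ω, (if m < W t ω then g (2 * m - W t ω) else 0) ∂P := by
  have hS : MeasurableSet {ω | m < M ω} := measurableSet_lt measurable_const hMmeas
  have hr : Measurable fun ω => 2 * m - W t ω := measurable_const.sub (hWmeas t)
  have hmap : (P.restrict {ω | m < M ω}).map (W t) =
      (P.restrict {ω | m < M ω}).map (fun ω => 2 * m - W t ω) := by
    refine ext_of_forall_integral_eq_of_IsFiniteMeasure fun f => ?_
    rw [integral_map (hWmeas t).aemeasurable (by fun_prop), integral_map hr.aemeasurable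
      (by fun_prop), ← integral_indicator hS, ← integral_indicator hS]
    exact reflect_bounded hWmeas hW0 hWcont hWindep hWgauss ht hm hM hMm f
  have hW_le : ∀ ω, W t ω ≤ M ω := fun ω => by
    rw [← hM]
    exact le_csSup (isCompact_Icc.image (hWcont ω)).bddAbove ⟨t, ⟨ht.le, le_rfl⟩, rfl⟩
  -- Reflection exchanges `W t < m` and `W t > m`; the boundary case `W t = m` has probability `0`.
  have hatom : ∀ᵐ ω ∂P, W t ω ≠ m := by
    have h1 : P.map (W t) = gaussianReal 0 t.toNNReal := by
      have := hWgauss 0 t le_rfl ht.le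
      simpa [hW0] using this
    have := nullSingletonClass_gaussianReal (μ := 0) (v := t.toNNReal) (by simpa using ht)
    have h2 : P.map (W t) {m} = 0 := by rw [h1]; exact measure_singleton m
    rw [Measure.map_apply (hWmeas t) (measurableSet_singleton m)] at h2
    exact measure_eq_zero_iff_ae_notMem.1 h2
  have hgm : Measurable ((Iic m).indicator g) := hg.indicator measurableSet_Iic
  calc _ = ∫⁻ ω in {ω | m < M ω}, (Iic m).indicator g (W t ω) ∂P := by
        rw [← lintegral_indicator hS]
        refine lintegral_congr fun ω => ?_
        by_cases h1 : W t ω ≤ m <;> by_cases h2 : m < M ω <;> simp [h1, h2]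
    _ = ∫⁻ ω in {ω | m < M ω}, (Iic m).indicator g (2 * m - W t ω) ∂P := by
        rw [← lintegral_map hgm (hWmeas t), hmap, lintegral_map hgm hr]
    _ = _ := by
        rw [← lintegral_indicator hS]
        refine lintegral_congr_ae ?_
        filter_upwards [hatom] with ω hω
        by_cases h1 : m < W t ω
        · have h2 : m < M ω := h1.trans_le (hW_le ω)
          have h3 : 2 * m - W t ω ≤ m := by linarith
          simp [h1, h2, h3]
        · have h3 : ¬ 2 * m - W t ω ≤ m := by
            have : W t ω < m := lt_of_le_of_ne (not_lt.1 h1) hω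
            linarith
          by_cases h2 : m < M ω <;> simp [h1, h2, h3]

/-! ### Computing the expectation -/

/-- The reflection principle integrated over the level `m`; the countably many levels that are atoms
of the law of `M(t)` do not contribute. -/
lemma lintegral_excess {Ω : Type*} [MeasurableSpace Ω] (P : Measure Ω) [IsProbabilityMeasure P]
    (W : ℝ → Ω → ℝ) (hWmeas : ∀ t, Measurable (W t)) (hW0 : ∀ ω, W 0 ω = 0)
    (hWcont : ∀ ω, Continuous fun t => W t ω)
    (hWindep : ∀ s t : ℝ, 0 ≤ s → s ≤ t → ∀ (m : ℕ) (v : Fin m → ℝ),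
      (∀ i, 0 ≤ v i ∧ v i ≤ s) →
      IndepFun (fun ω => W t ω - W s ω) (fun ω i => W (v i) ω) P)
    (hWgauss : ∀ s t : ℝ, 0 ≤ s → s ≤ t →
      Measure.map (fun ω => W t ω - W s ω) P = gaussianReal 0 (Real.toNNReal (t - s)))
    {t : ℝ} (ht : 0 < t) {M : Ω → ℝ} (hMmeas : Measurable M)
    (hM : ∀ ω, sSup ((fun s => W s ω) '' Icc 0 t) = M ω) (a c : ℝ) :
    ∫⁻ ω, (∫⁻ m in Ioi 0, (if W t ω ≤ m ∧ m < M ω then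
        ENNReal.ofReal (Real.exp (c * m + a * W t ω)) else 0)) ∂P =
      ∫⁻ ω, (∫⁻ m in Ioi 0, (if m < W t ω then
        ENNReal.ofReal (Real.exp (c * m + a * (2 * m - W t ω))) else 0)) ∂P := by
  have hW2 : Measurable fun p : Ω × ℝ => W t p.1 := (hWmeas t).comp measurable_fst
  have hM2 : Measurable fun p : Ω × ℝ => M p.1 := hMmeas.comp measurable_fst
  have h1 : Measurable fun p : Ω × ℝ => (if W t p.1 ≤ p.2 ∧ p.2 < M p.1 then
      ENNReal.ofReal (Real.exp (c * p.2 + a * W t p.1)) else 0) :=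
    Measurable.ite ((measurableSet_le hW2 measurable_snd).inter
      (measurableSet_lt measurable_snd hM2)) (by fun_prop) measurable_const
  have h2 : Measurable fun p : Ω × ℝ => (if p.2 < W t p.1 then
      ENNReal.ofReal (Real.exp (c * p.2 + a * (2 * p.2 - W t p.1))) else 0) :=
    Measurable.ite (measurableSet_lt measurable_snd hW2) (by fun_prop) measurable_const
  refine (lintegral_lintegral_swap h1.aemeasurable).trans
    (Eq.trans ?_ (lintegral_lintegral_swap h2.aemeasurable).symm)
  have hcount : {m | 0 < P {ω | M ω = m}}.Countable := Measure.countable_meas_level_set_pos hMmeas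
  refine lintegral_congr_ae ?_
  filter_upwards [ae_restrict_mem measurableSet_Ioi,
    ae_restrict_of_ae (hcount.ae_notMem volume)] with m hm0 hm
  have hnull : P {ω | M ω = m} = 0 := by simpa using hm
  have hm' : ∀ᵐ ω ∂P, M ω ≠ m := measure_eq_zero_iff_ae_notMem.1 hnull
  exact reflect_lintegral hWmeas hW0 hWcont hWindep hWgauss ht hm0 hMmeas hM hm'
    (g := fun w => ENNReal.ofReal (Real.exp (c * m + a * w))) (by fun_prop)

/-- The identity `exp (c M) = exp (c max w 0) + ∫ c exp (c m) dm` over `max w 0 < m < M`, multiplied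
by `exp (a w)` and arranged so that both sides have nonnegative terms for either sign of `c`. -/
lemma tail_pointwise (a c w M : ℝ) (hM : max w 0 ≤ M) :
    ENNReal.ofReal (Real.exp (a * w + c * M)) + ENNReal.ofReal (-c) *
        ∫⁻ m in Ioi 0, (if w ≤ m ∧ m < M then
          ENNReal.ofReal (Real.exp (c * m + a * w)) else 0) =
      ENNReal.ofReal (Real.exp (a * w + c * max w 0)) + ENNReal.ofReal c *
        ∫⁻ m in Ioi 0, (if w ≤ m ∧ m < M then
          ENNReal.ofReal (Real.exp (c * m + a * w)) else 0) := by
  set x := max w 0 with hx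
  have hI : ∫⁻ m in Ioi 0, (if w ≤ m ∧ m < M then
      ENNReal.ofReal (Real.exp (c * m + a * w)) else 0) =
      ENNReal.ofReal (∫ m in x..M, Real.exp (c * m + a * w)) := by
    have hcont : Continuous fun m => Real.exp (c * m + a * w) := by fun_prop
    rw [intervalIntegral.integral_of_le hM, ofReal_integral_eq_lintegral_ofReal
      (hcont.integrableOn_Ioc) (ae_of_all _ fun _ => (Real.exp_pos _).le),
      ← lintegral_indicator measurableSet_Ioi, ← lintegral_indicator measurableSet_Ioc]
    refine lintegral_congr_ae ?_
    filter_upwards [(countable_singleton x).ae_notMem volume,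
      (countable_singleton M).ae_notMem volume] with m hmx hmM
    have e1 : m ∈ Ioc x M ↔ m ∈ Ioi 0 ∧ w ≤ m ∧ m < M := by
      simp only [mem_singleton_iff] at hmx hmM
      simp only [mem_Ioc, mem_Ioi]
      constructor
      · rintro ⟨h1, h2⟩
        exact ⟨(le_max_right w 0).trans_lt h1, (le_max_left w 0).trans h1.le,
          lt_of_le_of_ne h2 hmM⟩
      · rintro ⟨h1, h2, h3⟩
        exact ⟨lt_of_le_of_ne (max_le h2 h1.le) (Ne.symm hmx), h3.le⟩
    by_cases h : m ∈ Ioc x M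
    · have h' := e1.1 h
      rw [indicator_of_mem h'.1, indicator_of_mem h, if_pos h'.2]
    · rw [indicator_of_notMem h]
      by_cases h0 : m ∈ Ioi 0
      · rw [indicator_of_mem h0, if_neg fun h1 => h (e1.2 ⟨h0, h1⟩)]
      · rw [indicator_of_notMem h0]
  have hJ : c * ∫ m in x..M, Real.exp (c * m + a * w) =
      Real.exp (a * w + c * M) - Real.exp (a * w + c * x) := by
    rw [← intervalIntegral.integral_const_mul, intervalIntegral.integral_eq_sub_of_hasDerivAt
      (f := fun m => Real.exp (a * w + c * m))]
    · intro m _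
      have h := (((hasDerivAt_id m).const_mul c).const_add (a * w)).exp
      convert! h using 1
      simp only [id]
      ring_nf
    · exact Continuous.intervalIntegrable (by fun_prop) _ _
  have hJ0 : 0 ≤ ∫ m in x..M, Real.exp (c * m + a * w) :=
    intervalIntegral.integral_nonneg hM fun _ _ => (Real.exp_pos _).le
  rw [hI]
  set J := ∫ m in x..M, Real.exp (c * m + a * w) with hJdef
  rcases le_total 0 c with hc | hc
  · rw [ENNReal.ofReal_of_nonpos (neg_nonpos.2 hc), zero_mul, add_zero, ← ENNReal.ofReal_mul hc,
      ← ENNReal.ofReal_add (Real.exp_pos _).le (mul_nonneg hc hJ0), hJ]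
    congr 1
    ring
  · rw [ENNReal.ofReal_of_nonpos hc, zero_mul, add_zero, ← ENNReal.ofReal_mul (neg_nonneg.2 hc),
      ← ENNReal.ofReal_add (Real.exp_pos _).le (mul_nonneg (neg_nonneg.2 hc) hJ0), neg_mul, hJ]
    congr 1
    ring

/-- The integral over `m > 0` of `exp ((b - a) m) E[exp (a (2m - X)); X > m]` for `X` of two-sided
exponential law. -/
lemma laplace_excess {l a b : ℝ} (hl : 0 < l) (ha : 0 ≤ a) (hb : b < l) :
    ∫⁻ x, (∫⁻ m in Ioi 0, (if m < x then
        ENNReal.ofReal (Real.exp ((b - a) * m + a * (2 * m - x))) else 0)) ∂(laplaceLaw l) =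
      ENNReal.ofReal (l / 2 / ((l + a) * (l - b))) := by
  have hmeas : Measurable fun p : ℝ × ℝ => (if p.2 < p.1 then
        ENNReal.ofReal (Real.exp ((b - a) * p.2 + a * (2 * p.2 - p.1))) else 0) :=
    Measurable.ite (measurableSet_lt measurable_snd measurable_fst) (by fun_prop)
      measurable_const
  have := isFiniteMeasure_laplaceLaw hl
  rw [lintegral_lintegral_swap hmeas.aemeasurable]
  have hinner : ∀ m ∈ Ioi (0 : ℝ), ∫⁻ x, (if m < x then
        ENNReal.ofReal (Real.exp ((b - a) * m + a * (2 * m - x))) else 0) ∂(laplaceLaw l) =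
      ENNReal.ofReal (l / 2 / (l + a)) * ENNReal.ofReal (Real.exp (-(l - b) * m)) := by
    intro m hm
    have hm : 0 < m := hm
    have hmm : Measurable fun x => (if m < x then
        ENNReal.ofReal (Real.exp ((b - a) * m + a * (2 * m - x))) else 0) :=
      hmeas.comp (measurable_id.prodMk measurable_const)
    rw [lintegral_laplaceLaw l hmm]
    have h1 : ∀ x : ℝ, ENNReal.ofReal (l / 2 * Real.exp (-l * |x|)) * (if m < x then
        ENNReal.ofReal (Real.exp ((b - a) * m + a * (2 * m - x))) else 0) =
        (Ioi m).indicator (fun x => ENNReal.ofReal (l / 2 * Real.exp ((b + a) * m)) *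
          ENNReal.ofReal (Real.exp (-(l + a) * x))) x := by
      intro x
      by_cases hx : m < x
      · rw [if_pos hx, indicator_of_mem (show x ∈ Ioi m from hx), abs_of_pos (hm.trans hx),
          ← ENNReal.ofReal_mul (by positivity), ← ENNReal.ofReal_mul (by positivity),
          mul_assoc, mul_assoc, ← Real.exp_add, ← Real.exp_add]
        ring_nf
      · rw [if_neg hx, indicator_of_notMem (show x ∉ Ioi m from hx), mul_zero]
    simp only [h1]
    rw [lintegral_indicator measurableSet_Ioi, lintegral_const_mul _ (by fun_prop),
      lintegral_exp_Ioi (by positivity), ← ENNReal.ofReal_mul (by positivity),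
      ← ENNReal.ofReal_mul (by positivity)]
    congr 1
    have : Real.exp (-(l - b) * m) = Real.exp ((b + a) * m) * Real.exp (-(l + a) * m) := by
      rw [← Real.exp_add]; ring_nf
    rw [this]
    ring
  rw [setLIntegral_congr_fun measurableSet_Ioi hinner, lintegral_const_mul _ (by fun_prop),
    lintegral_exp_Ioi (by linarith), ← ENNReal.ofReal_mul (by positivity)]
  congr 1
  have : l - b ≠ 0 := by linarith
  simp
  field_simp

lemma laplace_base {l a b : ℝ} (hl : 0 < l) (ha : 0 ≤ a) (hb : b < l) :
    ∫⁻ x, ENNReal.ofReal (Real.exp (a * x + (b - a) * max x 0)) ∂(laplaceLaw l) =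
      ENNReal.ofReal (l / 2 * (1 / (l - b) + 1 / (l + a))) := by
  rw [lintegral_laplaceLaw l (by fun_prop), ← lintegral_add_compl _ (measurableSet_Ioi (a := 0)),
    compl_Ioi]
  have h1 : EqOn (fun x : ℝ => ENNReal.ofReal (l / 2 * Real.exp (-l * |x|)) *
      ENNReal.ofReal (Real.exp (a * x + (b - a) * max x 0)))
      (fun x => ENNReal.ofReal (l / 2) * ENNReal.ofReal (Real.exp (-(l - b) * x))) (Ioi 0) := by
    intro x hx
    have hx : 0 < x := hx
    simp only [abs_of_pos hx, max_eq_left hx.le]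
    rw [← ENNReal.ofReal_mul (by positivity), ← ENNReal.ofReal_mul (by positivity), mul_assoc,
      ← Real.exp_add]
    ring_nf
  have h2 : EqOn (fun x : ℝ => ENNReal.ofReal (l / 2 * Real.exp (-l * |x|)) *
      ENNReal.ofReal (Real.exp (a * x + (b - a) * max x 0)))
      (fun x => ENNReal.ofReal (l / 2) * ENNReal.ofReal (Real.exp ((l + a) * x))) (Iic 0) := by
    intro x hx
    have hx : x ≤ 0 := hx
    simp only [abs_of_nonpos hx, max_eq_right hx]
    rw [← ENNReal.ofReal_mul (by positivity), ← ENNReal.ofReal_mul (by positivity), mul_assoc,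
      ← Real.exp_add]
    ring_nf
  have hb' : 0 < l - b := by linarith
  rw [setLIntegral_congr_fun measurableSet_Ioi h1, setLIntegral_congr_fun measurableSet_Iic h2,
    lintegral_const_mul _ (by fun_prop), lintegral_const_mul _ (by fun_prop),
    lintegral_exp_Ioi hb', lintegral_exp_Iic (by positivity), ← mul_add,
    ← ENNReal.ofReal_add (by positivity) (by positivity), ← ENNReal.ofReal_mul (by positivity)]
  simp

/-- **Wiener–Hopf factorization for Brownian motion at an independent exponential time.**
For every `r > 0`, `a ≥ 0` and `0 ≤ b < √(2r)`,
`E[∫_0^∞ r e^{−rt} e^{a(W(t) − M(t)) + b M(t)} dt]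
  = (√(2r)/(√(2r)+a)) · (√(2r)/(√(2r)−b))`,
where `M(t) = sup_{0≤s≤t} W(s)`. -/
theorem stmt_12 {Ω : Type*} [MeasurableSpace Ω] (P : Measure Ω) [IsProbabilityMeasure P]
    (W : ℝ → Ω → ℝ)
    (hWmeas : ∀ t, Measurable (W t))
    (hW0 : ∀ ω, W 0 ω = 0)
    (hWcont : ∀ ω, Continuous fun t => W t ω)
    (hWindep : ∀ s t : ℝ, 0 ≤ s → s ≤ t → ∀ (m : ℕ) (v : Fin m → ℝ),
      (∀ i, 0 ≤ v i ∧ v i ≤ s) →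
      IndepFun (fun ω => W t ω - W s ω) (fun ω i => W (v i) ω) P)
    (hWgauss : ∀ s t : ℝ, 0 ≤ s → s ≤ t →
      Measure.map (fun ω => W t ω - W s ω) P = gaussianReal 0 (Real.toNNReal (t - s)))
    (r a b : ℝ) (hr : 0 < r) (ha : 0 ≤ a) (hb0 : 0 ≤ b) (hb : b < Real.sqrt (2 * r)) :
    ∫⁻ ω, ∫⁻ t in Set.Ioi (0 : ℝ),
        ENNReal.ofReal (r * Real.exp (-r * t) *
          Real.exp (a * (W t ω - sSup ((fun s => W s ω) '' Set.Icc 0 t))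
            + b * sSup ((fun s => W s ω) '' Set.Icc 0 t))) ∂volume ∂P
      = ENNReal.ofReal ((Real.sqrt (2 * r) / (Real.sqrt (2 * r) + a))
          * (Real.sqrt (2 * r) / (Real.sqrt (2 * r) - b))) := by
  have hEprob := isProbabilityMeasure_expLaw hr
  have hWm := measurable_uncurry_path hWmeas hWcont
  obtain ⟨M, hMm, hM⟩ := exists_measurable_runningMax hWm hWcont
  have hmap := map_eq_laplaceLaw P hWmeas hWcont (fun t ht => by
    have := hWgauss 0 t le_rfl ht
    simpa [hW0] using this) hr
  have hl : 0 < Real.sqrt (2 * r) := by positivity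
  set l := Real.sqrt (2 * r) with hldef
  have hpos : ∀ᵐ t ∂(expLaw r), 0 < t :=
    (withDensity_absolutelyContinuous _ _).ae_le (ae_restrict_mem measurableSet_Ioi)
  set c := b - a with hc
  set Q := (expLaw r).prod P with hQ
  have hposQ : ∀ᵐ p ∂Q, 0 < p.1 := Measure.quasiMeasurePreserving_fst.ae hpos
  set H : ℝ≥0∞ := ∫⁻ p, ENNReal.ofReal (Real.exp (a * W p.1 p.2 + c * M p.1 p.2)) ∂Q with hH
  have hHm : Measurable fun p : ℝ × Ω =>
      ENNReal.ofReal (Real.exp (a * W p.1 p.2 + c * M p.1 p.2)) := by fun_prop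
  have hLHS : ∫⁻ ω, ∫⁻ t in Set.Ioi (0 : ℝ),
        ENNReal.ofReal (r * Real.exp (-r * t) *
          Real.exp (a * (W t ω - sSup ((fun s => W s ω) '' Set.Icc 0 t))
            + b * sSup ((fun s => W s ω) '' Set.Icc 0 t))) ∂volume ∂P = H := by
    rw [hH, hQ, lintegral_prod_symm _ hHm.aemeasurable]
    refine lintegral_congr fun ω => ?_
    have hHω : Measurable fun t => ENNReal.ofReal (Real.exp (a * W t ω + c * M t ω)) :=
      hHm.comp (measurable_id.prodMk measurable_const)
    rw [lintegral_expLaw r hHω]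
    refine setLIntegral_congr_fun measurableSet_Ioi fun t ht => ?_
    simp only [hM t ht]
    rw [ENNReal.ofReal_mul (by positivity)]
    congr 3
    rw [hc]
    ring
  have hexM : Measurable fun q : (ℝ × Ω) × ℝ => (if W q.1.1 q.1.2 ≤ q.2 ∧ q.2 < M q.1.1 q.1.2 then
      ENNReal.ofReal (Real.exp (c * q.2 + a * W q.1.1 q.1.2)) else 0) :=
    Measurable.ite ((measurableSet_le (hWm.comp measurable_fst) measurable_snd).inter
      (measurableSet_lt measurable_snd (hMm.comp measurable_fst)))
      (((measurable_snd.const_mul c).add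
        ((hWm.comp measurable_fst).const_mul a)).exp.ennreal_ofReal) measurable_const
  have hex1 := hexM.lintegral_prod_right' (ν := volume.restrict (Ioi (0 : ℝ)))
  have hrefM : Measurable fun q : ℝ × ℝ => (if q.2 < q.1 then
      ENNReal.ofReal (Real.exp (c * q.2 + a * (2 * q.2 - q.1))) else 0) :=
    Measurable.ite (measurableSet_lt measurable_snd measurable_fst) (by fun_prop)
      measurable_const
  have href1 := hrefM.lintegral_prod_right' (ν := volume.restrict (Ioi (0 : ℝ)))
  have hB : ∫⁻ p, (∫⁻ m in Ioi 0, (if W p.1 p.2 ≤ m ∧ m < M p.1 p.2 then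
      ENNReal.ofReal (Real.exp (c * m + a * W p.1 p.2)) else 0)) ∂Q =
      ENNReal.ofReal (l / 2 / ((l + a) * (l - b))) := by
    rw [← laplace_excess hl ha hb, ← hmap, lintegral_map href1 hWm, hQ]
    refine (lintegral_prod _ hex1.aemeasurable).trans
      (Eq.trans ?_ (lintegral_prod _ (href1.comp hWm).aemeasurable).symm)
    refine lintegral_congr_ae ?_
    filter_upwards [hpos] with t ht
    exact lintegral_excess P W hWmeas hW0 hWcont hWindep hWgauss ht
      (hMm.comp (measurable_const.prodMk measurable_id)) (hM t ht) a c
  have hC : ∫⁻ p, ENNReal.ofReal (Real.exp (a * W p.1 p.2 + c * max (W p.1 p.2) 0)) ∂Q =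
      ENNReal.ofReal (l / 2 * (1 / (l - b) + 1 / (l + a))) := by
    rw [← laplace_base hl ha hb, ← hmap, lintegral_map (by fun_prop) hWm]
  -- The pathwise identity of `tail_pointwise`, integrated; at most one of `ofReal c` and
  -- `ofReal (-c)` is nonzero.
  have hkey : H + ENNReal.ofReal (-c) * ENNReal.ofReal (l / 2 / ((l + a) * (l - b))) =
      ENNReal.ofReal (l / 2 * (1 / (l - b) + 1 / (l + a))) +
        ENNReal.ofReal c * ENNReal.ofReal (l / 2 / ((l + a) * (l - b))) := by
    rw [← hB, ← hC, hH, ← lintegral_const_mul _ hex1, ← lintegral_const_mul _ hex1,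
      ← lintegral_add_left hHm, ← lintegral_add_left (by fun_prop)]
    refine lintegral_congr_ae ?_
    filter_upwards [hposQ] with p hp
    refine tail_pointwise a c _ _ ?_
    have hbdd : BddAbove ((fun s => W s p.2) '' Icc 0 p.1) :=
      (isCompact_Icc.image (hWcont p.2)).bddAbove
    rw [← hM p.1 hp]
    refine max_le (le_csSup hbdd ⟨p.1, ⟨hp.le, le_rfl⟩, rfl⟩) ?_
    exact le_csSup hbdd ⟨0, ⟨le_rfl, hp.le⟩, hW0 p.2⟩
  rw [hLHS]
  have hb' : 0 < l - b := by linarith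
  have hD : 0 ≤ l / 2 / ((l + a) * (l - b)) := by positivity
  have hval : l / (l + a) * (l / (l - b)) =
      l / 2 * (1 / (l - b) + 1 / (l + a)) + c * (l / 2 / ((l + a) * (l - b))) := by
    rw [hc]
    field_simp
    ring
  rcases le_total 0 c with h0 | h0
  · rw [ENNReal.ofReal_of_nonpos (neg_nonpos.2 h0), zero_mul, add_zero, ← ENNReal.ofReal_mul h0,
      ← ENNReal.ofReal_add (by positivity) (mul_nonneg h0 hD), ← hval] at hkey
    exact hkey
  · rw [ENNReal.ofReal_of_nonpos h0, zero_mul, add_zero,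
      ← ENNReal.ofReal_mul (neg_nonneg.2 h0)] at hkey
    refine (ENNReal.add_left_inj (ENNReal.ofReal_ne_top
      (r := -c * (l / 2 / ((l + a) * (l - b)))))).1 (hkey.trans ?_)
    rw [← ENNReal.ofReal_add (by positivity) (mul_nonneg (neg_nonneg.2 h0) hD), hval]
    congr 1
    ring
end
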